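/- Assume Schanuel's Conjecture. If f and g are irreducible elements of 𝓔 such that f is not a unit of 𝓔 times g (i.e. f and g are distinct irreducibles up to units), then f and g have at most finitely many common zeros in ℂ. -/

import Mathlib

open Complex Set

noncomputable section

/-- `f` is an exponential polynomial, i.e. an element of the ring `𝓔`. -/
def IsExpPoly (f : ℂ → ℂ) : Prop :=
  ∃ (N : ℕ) (lam mu : Fin N → ℂ),
    ∀ z : ℂ, f z = ∑ i, lam i * Complex.exp (mu i * z)

/-- `h` divides `f` in the ring `𝓔`. -/
def EDvd (h f : ℂ → ℂ) : Prop :=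
  ∃ q : ℂ → ℂ, IsExpPoly q ∧ f = h * q

/-- `f` is a unit of the ring `𝓔`. -/
def EUnit (f : ℂ → ℂ) : Prop :=
  IsExpPoly f ∧ ∃ g : ℂ → ℂ, IsExpPoly g ∧ f * g = 1

/-- `f` is irreducible in the ring `𝓔`. -/
def EIrreducible (f : ℂ → ℂ) : Prop :=
  IsExpPoly f ∧ f ≠ 0 ∧ ¬ EUnit f ∧
    ∀ g h : ℂ → ℂ, IsExpPoly g → IsExpPoly h → f = g * h → EUnit g ∨ EUnit h

/-- canonical representation: pairwise distinct exponents, nonzero coefficients. -/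
def IsCanonicalRep (f : ℂ → ℂ) {N : ℕ} (lam mu : Fin N → ℂ) : Prop :=
  (∀ i, lam i ≠ 0) ∧ Function.Injective mu ∧
    ∀ z : ℂ, f z = ∑ i, lam i * Complex.exp (mu i * z)

/-- `f` is a simple exponential polynomial: its support has `ℚ`-dimension 1. -/
def IsSimple (f : ℂ → ℂ) : Prop :=
  ∃ (N : ℕ) (lam mu : Fin N → ℂ), IsCanonicalRep f lam mu ∧
    Module.finrank ℚ (Submodule.span ℚ (Set.range mu)) = 1

/-- Transcendence degree over `ℚ` of (the field generated by) a set of complex numbers. -/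
noncomputable def trdegQ (s : Set ℂ) : Cardinal.{0} :=
  ⨆ t : {t : Finset ℂ // ↑t ⊆ s ∧ AlgebraicIndependent ℚ (Subtype.val : {x : ℂ // x ∈ t} → ℂ)},
    (t.1.card : Cardinal)

/-- Schanuel's Conjecture. -/
def SchanuelConjecture : Prop :=
  ∀ (n : ℕ) (lam : Fin n → ℂ), LinearIndependent ℚ lam →
    (n : Cardinal) ≤ trdegQ (Set.range lam ∪ Set.range fun i => Complex.exp (lam i))


lemma skolem_lt (p : ℕ) [Fact p.Prime] (hp : 3 ≤ p) (c : ℕ → ℤ) (ε : ℚ) (hε : 0 < ε) :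
    {i : ℕ | ε ≤ padicNorm p ((p:ℚ)^i * c i / (Nat.factorial i : ℚ))}.Finite := by
  have key : ∀ i : ℕ, padicNorm p ((p:ℚ)^i * c i / (Nat.factorial i : ℚ)) ≤ 1 / 3 ^ (i/2) := by
    intro i
    rw [padicNorm.div, padicNorm.mul]
    have h1 : padicNorm p (c i : ℚ) ≤ 1 := padicNorm.of_int (c i)
    have h2 : padicNorm p ((p:ℚ)^i) = ((p:ℚ)^i)⁻¹ := by
      have hq : (p:ℚ) ≠ 0 := by have := (Fact.out : p.Prime).pos; positivity
      rw [padicNorm.eq_zpow_of_nonzero (pow_ne_zero _ hq), padicValRat.pow]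
      simp [padicValRat.self (Fact.out : p.Prime).one_lt]
    have hf : ((Nat.factorial i : ℕ) : ℚ) ≠ 0 := by positivity
    have h3 : padicNorm p (Nat.factorial i : ℚ) = ((p:ℚ)^(padicValNat p i.factorial))⁻¹ := by
      rw [padicNorm.eq_zpow_of_nonzero hf]
      simp
    have h4 := sub_one_mul_padicValNat_factorial (p := p) i
    have h5 : 2 * padicValNat p i.factorial ≤ i := by
      calc _ ≤ (p-1) * padicValNat p i.factorial := Nat.mul_le_mul_right _ (by omega)
        _ ≤ i := by omega
    rw [h2, h3]
    have hp0 : (0:ℚ) < p := by positivity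
    have hp3 : (3:ℚ) ≤ p := by exact_mod_cast hp
    obtain ⟨d, hd⟩ := Nat.exists_eq_add_of_le (show padicValNat p i.factorial + i/2 ≤ i by omega)
    have e1 : ((p:ℚ)^i)⁻¹ * padicNorm p (c i:ℚ) / ((p:ℚ)^(padicValNat p i.factorial))⁻¹
      ≤ ((p:ℚ)^i)⁻¹ * 1 / ((p:ℚ)^(padicValNat p i.factorial))⁻¹ := by gcongr
    refine e1.trans ?_
    rw [div_inv_eq_mul, mul_one, inv_mul_eq_div, div_le_div_iff₀ (by positivity) (by positivity), one_mul]
    calc (p:ℚ)^(padicValNat p i.factorial) * 3^(i/2) ≤ (p:ℚ)^(padicValNat p i.factorial) * p^(i/2) := by gcongr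
      _ = (p:ℚ)^(padicValNat p i.factorial + i/2) := by rw [pow_add]
      _ ≤ (p:ℚ)^i := pow_le_pow_right₀ (by linarith) (by omega)
  obtain ⟨n, hn⟩ := exists_pow_lt_of_lt_one hε (show (1/3:ℚ) < 1 by norm_num)
  refine (Set.finite_lt_nat (2*n+2)).subset ?_
  intro i hi
  by_contra hlt
  simp only [Set.mem_ofPred_eq, not_lt] at hlt hi
  have := hi.trans (key i)
  have h6 : (1:ℚ) / 3^(i/2) ≤ (1/3)^n := by
    rw [div_pow, one_pow]
    apply div_le_div_of_nonneg_left (by norm_num) (by positivity)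
    exact pow_le_pow_right₀ (by norm_num) (by omega)
  linarith

lemma skolem_coeff (p : ℕ) [Fact p.Prime] (hp : 3 ≤ p) (c : ℕ → ℤ)
    (hinf : {k : ℕ | ∑ i ∈ Finset.range (k+1), (k.choose i : ℤ) * p^i * c i = 0}.Infinite) :
    ∀ i, c i = 0 := by
  by_contra hne
  push Not at hne
  obtain ⟨m, hm⟩ := hne
  set g : ℕ → ℚ := fun i => (p:ℚ)^i * c i / (Nat.factorial i : ℚ) with hg
  have hp0 : (p:ℚ) ≠ 0 := by have := (Fact.out : p.Prime).pos; positivity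
  have hgm : g m ≠ 0 := by
    simp only [hg]
    have : (c m : ℚ) ≠ 0 := by exact_mod_cast hm
    positivity
  have hgm' : 0 < padicNorm p (g m) := by
    exact lt_of_le_of_ne (padicNorm.nonneg _) (Ne.symm (padicNorm.nonzero hgm))
  have hfin := skolem_lt p hp c _ hgm'
  obtain ⟨N, hN1, hN2⟩ := Finset.exists_max_image hfin.toFinset
    (fun i => toLex (padicNorm p (g i), i)) ⟨m, by simp [hg]⟩
  have hNm : padicNorm p (g m) ≤ padicNorm p (g N) := hfin.mem_toFinset.mp hN1
  have hlast : ∀ i, N < i → padicNorm p (g i) < padicNorm p (g N) := by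
    intro i hi
    by_cases h : padicNorm p (g m) ≤ padicNorm p (g i)
    · have := hN2 i (hfin.mem_toFinset.mpr h)
      rw [Prod.Lex.le_iff] at this
      rcases this with h | ⟨h, h'⟩
      · exact h
      · simp at h'; omega
    · exact (not_le.mp h).trans_le hNm
  obtain ⟨K, hKs, hKc⟩ := hinf.exists_subset_card_eq (N+1)
  set Q : Polynomial ℤ := ∏ k ∈ K, (Polynomial.X - Polynomial.C (k:ℤ)) with hQ
  have hQm : Q.Monic := Polynomial.monic_prod_of_monic _ _ (fun k _ => Polynomial.monic_X_sub_C _)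
  have hQd : Q.natDegree = N+1 := by
    rw [hQ, Polynomial.natDegree_prod_of_monic _ _ (fun k _ => Polynomial.monic_X_sub_C _)]
    simp_rw [Polynomial.natDegree_X_sub_C]
    simp [hKc]
  have hQdd : Q.degree = (N+1 : ℕ) := by rw [Polynomial.degree_eq_natDegree hQm.ne_zero, hQd]
  set R : ℕ → Polynomial ℤ := fun i => (descPochhammer ℤ i) %ₘ Q with hR
  have hRd : ∀ i, (R i).degree < (N+1:ℕ) := fun i => by
    rw [← hQdd]; exact Polynomial.degree_modByMonic_lt _ hQm
  have hRev : ∀ i, ∀ k ∈ K, (R i).eval (k:ℤ) = k.descFactorial i := by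
    intro i k hk
    have h1 := Polynomial.modByMonic_add_div (descPochhammer ℤ i) Q
    have h2 : Q.eval (k:ℤ) = 0 := by
      rw [hQ, Polynomial.eval_prod]
      exact Finset.prod_eq_zero hk (by simp)
    have h3 := congrArg (Polynomial.eval (k:ℤ)) h1
    rw [Polynomial.eval_add, Polynomial.eval_mul, h2, zero_mul, add_zero] at h3
    rw [hR]; simp only
    rw [h3, descPochhammer_eval_eq_descFactorial]
  set B := K.sup id + N + 1 with hB
  set P : Polynomial ℚ := ∑ i ∈ Finset.range B, Polynomial.C (g i) * (R i).map (Int.castRingHom ℚ) with hP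
  have hPd : P.degree < (N+1:ℕ) := by
    rw [hP]
    refine lt_of_le_of_lt (Polynomial.degree_sum_le _ _) ?_
    rw [Finset.sup_lt_iff (by exact WithBot.bot_lt_coe _)]
    intro i _
    rw [← Polynomial.smul_eq_C_mul]
    refine lt_of_le_of_lt (Polynomial.degree_smul_le _ _) ?_
    exact lt_of_le_of_lt Polynomial.degree_map_le (hRd i)
  have hP0 : P = 0 := by
    apply Polynomial.eq_zero_of_degree_lt_of_eval_finset_eq_zero (K.map ⟨fun k : ℕ => (k:ℚ), Nat.cast_injective⟩)
    · rw [Finset.card_map, hKc]; exact hPd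
    · intro x hx
      simp only [Finset.mem_map, Function.Embedding.coeFn_mk] at hx
      obtain ⟨k, hk, rfl⟩ := hx
      have hk0 : ∑ i ∈ Finset.range (k+1), (k.choose i : ℤ) * p^i * c i = 0 := hKs hk
      have hkB : k + 1 ≤ B := by
        have := Finset.le_sup (f := id) hk
        simp at this; omega
      rw [hP, Polynomial.eval_finsetSum]
      have hterm : ∀ i, Polynomial.eval (k:ℚ) (Polynomial.C (g i) * (R i).map (Int.castRingHom ℚ))
          = (k.choose i : ℚ) * p^i * c i := by
        intro i
        have e1 : Polynomial.eval (k:ℚ) ((R i).map (Int.castRingHom ℚ)) = k.descFactorial i := by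
          have := Polynomial.eval_map_apply (p := R i) (Int.castRingHom ℚ) (k:ℤ)
          rw [hRev i k hk] at this
          simpa using this
        rw [Polynomial.eval_mul, Polynomial.eval_C, e1, Nat.descFactorial_eq_factorial_mul_choose, hg]
        have : ((Nat.factorial i : ℕ) : ℚ) ≠ 0 := by positivity
        push_cast
        field_simp
      simp_rw [hterm]
      rw [← Finset.sum_subset (Finset.range_mono hkB)]
      · exact_mod_cast hk0
      · intro i _ hi
        rw [Nat.choose_eq_zero_of_lt (by simpa using hi)]; simp
  have hcoef := congrArg (fun q => Polynomial.coeff q N) hP0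
  simp only [hP, Polynomial.finsetSum_coeff, Polynomial.coeff_C_mul, Polynomial.coeff_map, Polynomial.coeff_zero] at hcoef
  have hRle : ∀ i, i ≤ N → R i = descPochhammer ℤ i := by
    intro i hi
    rw [hR]; simp only
    rw [Polynomial.modByMonic_eq_self_iff hQm, hQdd, Polynomial.degree_eq_natDegree (monic_descPochhammer ℤ i).ne_zero, descPochhammer_natDegree]
    exact_mod_cast (by omega)
  rw [← Finset.sum_erase_add _ _ (show N ∈ Finset.range B by simp [hB]), hRle N le_rfl] at hcoef
  have hlead : (descPochhammer ℤ N).coeff N = 1 := by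
    have := monic_descPochhammer ℤ N
    rwa [Polynomial.Monic, Polynomial.leadingCoeff, descPochhammer_natDegree] at this
  rw [hlead] at hcoef
  have h7 : padicNorm p (∑ i ∈ (Finset.range B).erase N, g i * (Int.castRingHom ℚ) ((R i).coeff N)) < padicNorm p (g N) := by
    apply padicNorm.sum_lt' _ (hgm'.trans_le hNm)
    intro i hi
    rw [Finset.mem_erase] at hi
    rcases lt_or_gt_of_ne hi.1 with h | h
    · rw [hRle i h.le, Polynomial.coeff_eq_zero_of_natDegree_lt (by rwa [descPochhammer_natDegree])]
      simpa using hgm'.trans_le hNm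
    · rw [padicNorm.mul]
      calc _ ≤ padicNorm p (g i) * 1 := by
            gcongr
            · exact padicNorm.nonneg _
            · exact padicNorm.of_int _
        _ < _ := by rw [mul_one]; exact hlast i h
  have h8 : ∑ i ∈ (Finset.range B).erase N, g i * (Int.castRingHom ℚ) ((R i).coeff N) = - g N := by
    have : (Int.castRingHom ℚ) 1 = 1 := by simp
    rw [this] at hcoef; linarith
  rw [h8, padicNorm.neg] at h7
  exact lt_irrefl _ h7


lemma zring {ι O : Type*} [CommRing O] [IsDomain O] [CharZero O] [Module.Finite ℤ O] [Module.Free ℤ O]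
    (J : Finset ι) (lam b : ι → O) (hb : ∀ j ∈ J, b j ≠ 0) (j0 : ι) :
    {n : ℕ | ∑ j ∈ J, lam j * b j ^ n = 0 ∧
      (open Classical in ∑ j ∈ J with (∃ e : ℕ, 0 < e ∧ b j ^ e = b j0 ^ e), lam j * b j ^ n) ≠ 0}.Finite := by
  classical
  by_contra hE
  set E := {n : ℕ | ∑ j ∈ J, lam j * b j ^ n = 0 ∧
      ∑ j ∈ J with (∃ e : ℕ, 0 < e ∧ b j ^ e = b j0 ^ e), lam j * b j ^ n ≠ 0} with hEdef
  have hE : E.Infinite := by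
    intro h; apply hE; convert h
  -- multiples
  have hm : ∀ j ∈ J, ∃ m : ℤ, m ≠ 0 ∧ b j ∣ (m : O) := by
    intro j hj
    have h1 : IsAlgebraic ℤ (b j) := (Algebra.IsIntegral.isIntegral (R := ℤ) (b j)).isAlgebraic
    obtain ⟨r, hr, h⟩ := h1.exists_nonzero_dvd (mem_nonZeroDivisors_of_ne_zero (hb j hj))
    exact ⟨r, hr, by simpa using h⟩
  choose! m hm0 hmd using hm
  obtain ⟨p, hpge, hpp⟩ := Nat.exists_infinite_primes ((∏ j ∈ J, (m j)).natAbs + 3)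
  have : Fact p.Prime := ⟨hpp⟩
  have hpm : ∀ j ∈ J, ¬ (p:ℤ) ∣ m j := by
    intro j hj hd
    have h1 : (p:ℤ) ∣ ∏ j ∈ J, (m j) := hd.trans (Finset.dvd_prod_of_mem _ hj)
    have h2 : ∏ j ∈ J, (m j) ≠ 0 := Finset.prod_ne_zero_iff.mpr hm0
    have h3 := Nat.le_of_dvd (Int.natAbs_pos.mpr h2) (Int.natCast_dvd.mp h1)
    omega
  set I : Ideal O := Ideal.span {(p:O)} with hI
  have hIb : I ≠ ⊥ := by
    rw [hI, Ne, Ideal.span_singleton_eq_bot]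
    exact_mod_cast hpp.ne_zero
  have : Finite (O ⧸ I) := Ideal.finiteQuotientOfFreeOfNeBot I hIb
  have hunit : ∀ j ∈ J, IsUnit (Ideal.Quotient.mk I (b j)) := by
    intro j hj
    have hc : IsCoprime (p:ℤ) (m j) := by
      rw [(Nat.prime_iff_prime_int.mp hpp).coprime_iff_not_dvd]; exact hpm j hj
    obtain ⟨u, v, huv⟩ := hc
    have h1 : (Ideal.Quotient.mk I) ((u * p + v * m j : ℤ) : O) = 1 := by rw [huv]; simp
    have h2 : (Ideal.Quotient.mk I) (p:O) = 0 := by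
      rw [Ideal.Quotient.eq_zero_iff_mem]; exact Ideal.mem_span_singleton_self _
    obtain ⟨d, hd⟩ := hmd j hj
    refine IsUnit.of_mul_eq_one (Ideal.Quotient.mk I (d * v)) ?_
    push_cast at h1
    rw [map_add, map_mul, h2, mul_zero, zero_add, hd] at h1
    rw [← map_mul, ← h1]; congr 1; ring
  set e := Nat.card (O ⧸ I)ˣ with he
  have he0 : 0 < e := Nat.card_pos
  have hbe : ∀ j ∈ J, ∃ β : O, b j ^ e = 1 + p * β := by
    intro j hj
    obtain ⟨u, hu⟩ := hunit j hj
    have h1 : u ^ e = 1 := pow_card_eq_one'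
    have h2 : Ideal.Quotient.mk I (b j ^ e - 1) = 0 := by
      rw [map_sub, map_pow, ← hu, ← Units.val_pow_eq_pow_val, h1]; simp
    rw [Ideal.Quotient.eq_zero_iff_mem, hI, Ideal.mem_span_singleton] at h2
    obtain ⟨β, hβ⟩ := h2
    exact ⟨β, by rw [← hβ]; ring⟩
  choose! β hβ using hbe
  -- pigeonhole
  obtain ⟨r, hr, hrE⟩ : ∃ r ∈ Set.Iio e, (E ∩ {n | n % e = r}).Infinite := by
    by_contra hcon
    push Not at hcon
    apply hE
    have : E ⊆ ⋃ r ∈ Set.Iio e, (E ∩ {n | n % e = r}) := by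
      intro n hn
      simp only [Set.mem_iUnion]
      exact ⟨n % e, Nat.mod_lt _ he0, hn, rfl⟩
    exact ((Set.finite_Iio e).biUnion hcon).subset this
  set K := {k : ℕ | r + e * k ∈ E} with hK
  have hKinf : K.Infinite := by
    intro hfin
    apply hrE
    refine (hfin.image (fun k => r + e * k)).subset ?_
    rintro n ⟨hn, hnr⟩
    have hnr' : n % e = r := hnr
    have : r + e * (n / e) = n := by rw [← hnr']; exact Nat.mod_add_div n e
    exact ⟨n / e, by simp only [hK, Set.mem_ofPred_eq]; rw [this]; exact hn, this⟩
  set μ : ι → O := fun j => lam j * b j ^ r with hμ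
  have hterm : ∀ j ∈ J, ∀ k : ℕ, lam j * b j ^ (r + e * k) = μ j * (1 + p * β j) ^ k := by
    intro j hj k
    rw [pow_add, pow_mul, hβ j hj]; simp only [hμ]; ring
  set c : ℕ → O := fun i => ∑ j ∈ J, μ j * β j ^ i with hc
  have hsum : ∀ k : ℕ, ∑ j ∈ J, lam j * b j ^ (r + e * k) =
      ∑ i ∈ Finset.range (k+1), ((k.choose i * p^i : ℤ)) • c i := by
    intro k
    rw [Finset.sum_congr rfl (fun j hj => hterm j hj k)]
    simp_rw [hc, Finset.smul_sum]
    rw [Finset.sum_comm]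
    refine Finset.sum_congr rfl fun j _ => ?_
    rw [add_comm, add_pow, Finset.mul_sum]
    refine Finset.sum_congr rfl fun i _ => ?_
    rw [zsmul_eq_mul]; push_cast; rw [mul_pow]; ring
  have hc0 : ∀ i, c i = 0 := by
    intro i
    let B := Module.Free.chooseBasis ℤ O
    apply B.ext_elem
    intro l
    have := skolem_coeff p (by omega) (fun i => B.repr (c i) l) ?_ i
    · simpa using this
    · refine hKinf.mono ?_
      intro k hk
      have h1 : ∑ j ∈ J, lam j * b j ^ (r + e * k) = 0 := hk.1
      rw [hsum] at h1
      have h2 := congrArg (fun x => B.repr x l) h1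
      simp only [map_sum, map_zsmul, Finsupp.finsetSum_apply, Finsupp.smul_apply, smul_eq_mul, map_zero, Finsupp.zero_apply] at h2
      exact h2
  have hpoly : ∀ P : Polynomial O, ∑ j ∈ J, μ j * P.eval (β j) = 0 := by
    intro P
    simp_rw [Polynomial.eval_eq_sum_range, Finset.mul_sum]
    rw [Finset.sum_comm]
    refine Finset.sum_eq_zero fun i _ => ?_
    have := hc0 i
    simp only [hc] at this
    calc _ = P.coeff i * ∑ j ∈ J, μ j * β j ^ i := by
          rw [Finset.mul_sum]; exact Finset.sum_congr rfl fun j _ => by ring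
      _ = 0 := by rw [this, mul_zero]
  have hfib : ∀ x : O, ∑ j ∈ J with β j = x, μ j = 0 := by
    intro x
    set P : Polynomial O := ∏ y ∈ (J.image β).erase x, (Polynomial.X - Polynomial.C y) with hP
    have h1 := hpoly P
    have hPx : P.eval x ≠ 0 := by
      rw [hP, Polynomial.eval_prod, Finset.prod_ne_zero_iff]
      intro y hy
      simp only [Polynomial.eval_sub, Polynomial.eval_X, Polynomial.eval_C, sub_ne_zero]
      exact (Finset.ne_of_mem_erase hy).symm
    have h2 : ∑ j ∈ J, μ j * P.eval (β j) = (∑ j ∈ J with β j = x, μ j) * P.eval x := by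
      rw [Finset.sum_mul, Finset.sum_filter]
      refine Finset.sum_congr rfl fun j hj => ?_
      split_ifs with h
      · rw [h]
      · have : P.eval (β j) = 0 := by
          rw [hP, Polynomial.eval_prod]
          exact Finset.prod_eq_zero (i := β j) (Finset.mem_erase.mpr ⟨h, Finset.mem_image_of_mem _ hj⟩) (by simp)
        rw [this, mul_zero]
    rw [h2] at h1
    exact (mul_eq_zero.mp h1).resolve_right hPx
  obtain ⟨k, hk⟩ := hKinf.nonempty
  apply hk.2
  rw [Finset.sum_congr rfl (fun j hj => hterm j (Finset.mem_of_mem_filter j hj) k)]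
  rw [← Finset.sum_fiberwise_of_maps_to (g := β) (t := J.image β) (fun j hj => Finset.mem_image_of_mem _ (Finset.mem_of_mem_filter j hj))]
  refine Finset.sum_eq_zero fun x _ => ?_
  rw [Finset.filter_filter]
  by_cases hx : ∃ i ∈ J, β i = x ∧ ∃ e : ℕ, 0 < e ∧ b i ^ e = b j0 ^ e
  · obtain ⟨i, hi, hix, f, hf0, hf⟩ := hx
    have h3 : (J.filter fun j => (∃ e : ℕ, 0 < e ∧ b j ^ e = b j0 ^ e) ∧ β j = x) = J.filter fun j => β j = x := by
      refine Finset.filter_congr fun j hj => ⟨fun h => h.2, fun h => ⟨⟨e * f, Nat.mul_pos he0 hf0, ?_⟩, h⟩⟩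
      rw [pow_mul, hβ j hj, h, ← hix, ← hβ i hi, ← pow_mul, mul_comm e f, pow_mul, hf, ← pow_mul]
    rw [h3]
    have := hfib x
    calc _ = ∑ j ∈ J with β j = x, μ j * (1 + p * x)^k := by
          refine Finset.sum_congr rfl fun j hj => ?_
          rw [(Finset.mem_filter.mp hj).2]
      _ = 0 := by rw [← Finset.sum_mul, this, zero_mul]
  · apply Finset.sum_eq_zero
    intro j hj
    rw [Finset.mem_filter] at hj
    exact absurd ⟨j, hj.1, hj.2.2, hj.2.1⟩ hx

open Classical in
lemma thmN {ι : Type*} (J : Finset ι) (lam α : ι → ℂ) (hl : ∀ j ∈ J, IsAlgebraic ℚ (lam j))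
    (hα : ∀ j ∈ J, IsAlgebraic ℚ (α j)) (h0 : ∀ j ∈ J, α j ≠ 0) (j0 : ι) (hj0 : j0 ∈ J) :
    {n : ℕ | ∑ j ∈ J, lam j * α j ^ n = 0 ∧
      ∑ j ∈ J with (∃ e : ℕ, 0 < e ∧ α j ^ e = α j0 ^ e), lam j * α j ^ n ≠ 0}.Finite := by
  obtain ⟨D, hD0, hD⟩ : ∃ D : ℤ, D ≠ 0 ∧ ∀ x ∈ J.image lam ∪ J.image α, IsIntegral ℤ (D • x) := by
    have hgen : ∀ x ∈ J.image lam ∪ J.image α, ∃ d : ℤ, d ≠ 0 ∧ IsIntegral ℤ (d • x) := by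
      intro x hx
      have hx' : IsAlgebraic ℚ x := by
        rw [Finset.mem_union, Finset.mem_image, Finset.mem_image] at hx
        rcases hx with ⟨j, hj, rfl⟩ | ⟨j, hj, rfl⟩
        · exact hl j hj
        · exact hα j hj
      exact ((IsFractionRing.isAlgebraic_iff ℤ ℚ ℂ).mpr hx').exists_integral_multiple
    choose! d hd0 hd using hgen
    refine ⟨∏ x ∈ J.image lam ∪ J.image α, d x, Finset.prod_ne_zero_iff.mpr hd0, fun x hx => ?_⟩
    rw [← Finset.prod_erase_mul _ _ hx, mul_smul]
    exact (hd x hx).smul _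
  set S : Set ℂ := (((J.image lam ∪ J.image α).image (fun x => D • x) : Finset ℂ) : Set ℂ) with hS
  have hSl : ∀ j ∈ J, D • lam j ∈ S := fun j hj => by
    simp only [hS, Finset.coe_image]
    exact ⟨lam j, by simp; exact Or.inl ⟨j, hj, rfl⟩, rfl⟩
  have hSα : ∀ j ∈ J, D • α j ∈ S := fun j hj => by
    simp only [hS, Finset.coe_image]
    exact ⟨α j, by simp; exact Or.inr ⟨j, hj, rfl⟩, rfl⟩
  set O := Algebra.adjoin ℤ S with hO
  have hfin : Module.Finite ℤ O := by
    apply Algebra.finite_adjoin_of_finite_of_isIntegral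
    · exact Finset.finite_toSet _
    · intro x hx
      simp only [hS, Finset.coe_image] at hx
      obtain ⟨y, hy, rfl⟩ := hx
      exact hD y (by simpa using hy)
  have hfree : Module.Free ℤ O := inferInstance
  have hOl : ∀ j ∈ J, D • lam j ∈ O := fun j hj => Algebra.subset_adjoin (hSl j hj)
  have hOα : ∀ j ∈ J, D • α j ∈ O := fun j hj => Algebra.subset_adjoin (hSα j hj)
  let l' : ι → O := fun j => if h : j ∈ J then ⟨D • lam j, hOl j h⟩ else 0
  let b' : ι → O := fun j => if h : j ∈ J then ⟨D • α j, hOα j h⟩ else 0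
  have hDC : (D:ℂ) ≠ 0 := by exact_mod_cast hD0
  have el : ∀ j ∈ J, (l' j : ℂ) = D * lam j := fun j hj => by simp [l', hj]
  have eb : ∀ j ∈ J, (b' j : ℂ) = D * α j := fun j hj => by simp [b', hj]
  refine (zring J l' b' ?_ j0).subset ?_
  · intro j hj h
    have : (b' j : ℂ) = 0 := by rw [h]; simp
    rw [eb j hj] at this
    exact mul_ne_zero hDC (h0 j hj) this
  · rintro n ⟨h1, h2⟩
    have key : ∀ J' ⊆ J, ((∑ j ∈ J', l' j * b' j ^ n : O) : ℂ) = D^(n+1) * ∑ j ∈ J', lam j * α j ^ n := by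
      intro J' hJ'
      push_cast
      rw [Finset.mul_sum]
      refine Finset.sum_congr rfl fun j hj => ?_
      rw [el j (hJ' hj), eb j (hJ' hj)]; ring
    refine ⟨?_, ?_⟩
    · apply Subtype.ext
      rw [key J subset_rfl, h1]; simp
    · intro h3
      apply h2
      have h4 := congrArg (Subtype.val) h3
      rw [key _ (Finset.filter_subset _ _)] at h4
      have h5 := (mul_eq_zero.mp h4).resolve_left (pow_ne_zero _ hDC)
      rw [← h5]
      refine Finset.sum_congr (Finset.filter_congr fun j hj => ?_) fun _ _ => rfl
      refine exists_congr fun e => and_congr_right fun _ => ?_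
      rw [Subtype.ext_iff]
      push_cast
      rw [eb j hj, eb j0 hj0, mul_pow, mul_pow, mul_right_inj' (pow_ne_zero _ hDC)]

open Classical in
lemma thmZ {ι : Type*} (J : Finset ι) (lam α : ι → ℂ) (hl : ∀ j ∈ J, IsAlgebraic ℚ (lam j))
    (hα : ∀ j ∈ J, IsAlgebraic ℚ (α j)) (h0 : ∀ j ∈ J, α j ≠ 0) (j0 : ι) (hj0 : j0 ∈ J) :
    {n : ℤ | ∑ j ∈ J, lam j * α j ^ n = 0 ∧
      ∑ j ∈ J with (∃ e : ℕ, 0 < e ∧ α j ^ e = α j0 ^ e), lam j * α j ^ n ≠ 0}.Finite := by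
  have h1 := thmN J lam α hl hα h0 j0 hj0
  have h2 := thmN J lam (fun j => (α j)⁻¹) hl (fun j hj => (hα j hj).inv) (fun j hj => inv_ne_zero (h0 j hj)) j0 hj0
  refine ((h1.image (fun n : ℕ => (n:ℤ))).union (h2.image (fun n : ℕ => -(n:ℤ)))).subset ?_
  rintro n ⟨ha, hb⟩
  rcases le_total 0 n with hn | hn
  · left
    lift n to ℕ using hn
    exact ⟨n, ⟨by simpa using ha, by simpa using hb⟩, rfl⟩
  · right
    obtain ⟨m, rfl⟩ : ∃ m : ℕ, n = -(m:ℤ) := ⟨n.natAbs, by omega⟩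
    refine ⟨m, ⟨by simpa using ha, ?_⟩, rfl⟩
    simpa using hb


lemma roots_finite (K : Type) [Field K] [NumberField K] (θ : K) (h0 : θ ≠ 0)
    (hθ : ∀ n : ℕ, 0 < n → θ ^ n ≠ 1) : {b : ℕ | 0 < b ∧ ∃ δ : K, δ ^ b = θ}.Finite := by
  by_contra hinf
  have hinf : {b : ℕ | 0 < b ∧ ∃ δ : K, δ ^ b = θ}.Infinite := hinf
  have halg : IsAlgebraic ℤ θ := (IsFractionRing.isAlgebraic_iff ℤ ℚ K).mpr (Algebra.IsAlgebraic.isAlgebraic θ)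
  obtain ⟨m, hm0, hm⟩ := halg.exists_integral_multiple
  have hmK : (m:K) ≠ 0 := by exact_mod_cast hm0
  have hex : ∃ B : ℝ, 1 ≤ B ∧ ∀ φ : K →+* ℂ, ‖φ θ‖ ≤ B := by
    refine ⟨1 + ∑ φ : K →+* ℂ, ‖φ θ‖, ?_, fun φ => ?_⟩
    · have : 0 ≤ ∑ φ : K →+* ℂ, ‖φ θ‖ := Finset.sum_nonneg fun _ _ => norm_nonneg _
      linarith
    · have := Finset.single_le_sum (f := fun φ : K →+* ℂ => ‖φ θ‖) (fun _ _ => norm_nonneg _) (Finset.mem_univ φ)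
      linarith
  obtain ⟨B, hB1, hB⟩ := hex
  have hfin := NumberField.Embeddings.finite_of_norm_le K ℂ (‖(m:ℂ)‖ * B)
  choose! δ hδ using fun b (hb : b ∈ {b : ℕ | 0 < b ∧ ∃ δ : K, δ ^ b = θ}) => hb.2
  have hmaps : Set.MapsTo (fun b => m • δ b) {b : ℕ | 0 < b ∧ ∃ δ : K, δ ^ b = θ}
      {x : K | IsIntegral ℤ x ∧ ∀ φ : K →+* ℂ, ‖φ x‖ ≤ ‖(m:ℂ)‖ * B} := by
    intro b hb
    refine ⟨?_, fun φ => ?_⟩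
    · apply IsIntegral.of_pow hb.1
      rw [smul_pow, hδ b hb]
      obtain ⟨b', rfl⟩ := Nat.exists_eq_succ_of_ne_zero hb.1.ne'
      rw [pow_succ, mul_smul]
      exact hm.smul _
    · simp only [zsmul_eq_mul, map_mul, map_intCast, norm_mul]
      gcongr
      by_contra hlt
      push Not at hlt
      have h1 : ‖φ (δ b)‖ ^ b = ‖φ θ‖ := by rw [← norm_pow, ← map_pow, hδ b hb]
      have h2 : ‖φ (δ b)‖ ≤ ‖φ (δ b)‖ ^ b := le_self_pow₀ (by linarith) hb.1.ne'
      linarith [hB φ]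
  obtain ⟨b, hb, b', hb', hne, heq⟩ := hinf.exists_ne_map_eq_of_mapsTo hmaps hfin
  have heq' : δ b = δ b' := by
    simp only [zsmul_eq_mul] at heq
    exact mul_left_cancel₀ hmK heq
  wlog hlt : b < b' generalizing b b'
  · exact this b' hb' b hb hne.symm heq.symm heq'.symm (by omega)
  have hδ0 : δ b ≠ 0 := by
    intro h
    have := hδ b hb
    rw [h, zero_pow hb.1.ne'] at this
    exact h0 this.symm
  have h3 : δ b ^ (b' - b) = 1 := by
    have e1 : δ b ^ b * δ b ^ (b'-b) = δ b ^ b := by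
      rw [← pow_add, Nat.add_sub_cancel' hlt.le, hδ b hb, heq', hδ b' hb']
    exact mul_left_cancel₀ (pow_ne_zero b hδ0) (e1.trans (mul_one _).symm)
  apply hθ (b' - b) (by omega)
  rw [← hδ b hb, ← pow_mul, mul_comm, pow_mul, h3, one_pow]

lemma aut_comm_root {A : Type} [Field A] [Algebra ℚ A] (σ τ : A ≃ₐ[ℚ] A) (z : A) (n : ℕ) (hn : 0 < n)
    (hz : z ^ n = 1) : σ (τ z) = τ (σ z) := by
  have : NeZero n := ⟨hn.ne'⟩
  obtain ⟨s, hs⟩ := map_rootsOfUnity_eq_pow_self σ (rootsOfUnity.mkOfPowEq z hz)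
  obtain ⟨t, ht⟩ := map_rootsOfUnity_eq_pow_self τ (rootsOfUnity.mkOfPowEq z hz)
  simp only [rootsOfUnity.val_mkOfPowEq_coe] at hs ht
  rw [ht, hs, map_pow, map_pow, hs, ht, ← pow_mul, ← pow_mul, mul_comm]

/-- fixed by all automorphisms fixing M and all roots of unity -/
def MFix {A : Type} [Field A] [Algebra ℚ A] (M : IntermediateField ℚ A) : Set (A ≃ₐ[ℚ] A) :=
  {σ | (∀ x ∈ M, σ x = x) ∧ ∀ (n : ℕ) (z : A), 0 < n → z ^ n = 1 → σ z = z}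

lemma kummer_x {A : Type} [Field A] [CharZero A] [Algebra ℚ A] [IsAlgClosed A] [Algebra.IsAlgebraic ℚ A]
    (M : IntermediateField ℚ A) [FiniteDimensional ℚ M] [Normal ℚ M] (α : A) (hαM : α ∈ M) (h0 : α ≠ 0)
    (hα : ∀ n : ℕ, 0 < n → α ^ n ≠ 1) (x : ℕ) (hx : 2 ≤ x) :
    {b : ℕ | 0 < b ∧ x.Coprime b ∧ ∃ β : A, β ^ b = α ∧ ∀ σ ∈ MFix M, σ β = β}.Finite := by
  rename_i iA _ _ _ _
  obtain rfl : iA = DivisionRing.toRatAlgebra := Subsingleton.elim _ _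
  have : IsAlgClosure ℚ A := ⟨inferInstance, inferInstance⟩
  have hgal : IsGalois ℚ A := IsAlgClosure.isGalois ℚ A
  have hstab : ∀ (τ : A ≃ₐ[ℚ] A) (y : A), y ∈ M → τ y ∈ M := by
    intro τ y hy
    have := AlgEquiv.restrictNormal_commutes τ M ⟨y, hy⟩
    have h2 : τ y = ((τ.restrictNormal M) ⟨y, hy⟩ : M) := this.symm
    rw [h2]; exact Subtype.mem _
  -- finite set of conjugates
  have hconj : {α' : A | ∃ τ : A ≃ₐ[ℚ] A, τ α = α'}.Finite := by
    refine ((minpoly ℚ α).rootSet_finite A).subset ?_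
    rintro _ ⟨τ, rfl⟩
    have hi : IsIntegral ℚ α := Algebra.IsIntegral.isIntegral α
    rw [Polynomial.mem_rootSet]
    refine ⟨minpoly.ne_zero hi, ?_⟩
    have := Polynomial.aeval_algHom_apply (τ : A →ₐ[ℚ] A) α (minpoly ℚ α)
    rw [minpoly.aeval, map_zero] at this
    exact this
  have hnum : NumberField M := by
    refine @NumberField.mk _ _ inferInstance ?_
    convert ‹FiniteDimensional ℚ M›
  have hmain : ∀ τ : A ≃ₐ[ℚ] A, {b : ℕ | 0 < b ∧ ∃ δ : M, (δ:A) ^ b = α ^ x / τ α}.Finite := by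
    intro τ
    set θ : M := ⟨α ^ x / τ α, M.div_mem (pow_mem hαM x) (hstab τ α hαM)⟩ with hθ
    have hτ0 : τ α ≠ 0 := by simpa using h0
    have := roots_finite M θ (by
      intro h
      have := congrArg Subtype.val h
      simp [hθ, h0] at this) ?_
    · refine this.subset ?_
      rintro b ⟨hb, δ, hδ⟩
      exact ⟨hb, δ, Subtype.ext (by simpa [hθ] using hδ)⟩
    · intro n hn h
      have h1 : (α ^ x / τ α) ^ n = 1 := by
        have := congrArg Subtype.val h
        simpa [hθ] using this
      have h2 : α ^ (x * n) = τ (α ^ n) := by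
        rw [div_pow, div_eq_one_iff_eq (pow_ne_zero _ hτ0), ← pow_mul] at h1
        rw [h1, map_pow]
      -- iterate
      have h3 : ∀ k : ℕ, α ^ (x ^ k * n) = (τ ^ k) (α ^ n) := by
        intro k
        induction k with
        | zero => simp
        | succ k ih =>
          rw [pow_succ' τ, AlgEquiv.mul_apply, ← ih, pow_succ' x,
            show x * x ^ k * n = (x * n) * x ^ k by ring, pow_mul, h2, ← map_pow, ← pow_mul, mul_comm n]
      -- finite orbit
      have hmaps : Set.MapsTo (fun k : ℕ => (τ ^ k) α) Set.univ {α' : A | ∃ τ : A ≃ₐ[ℚ] A, τ α = α'} :=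
        fun k _ => ⟨τ ^ k, rfl⟩
      obtain ⟨k, _, k', _, hne, heq⟩ := Set.infinite_univ.exists_ne_map_eq_of_mapsTo hmaps hconj
      wlog hlt : k < k' generalizing k k'
      · exact this k' trivial k trivial hne.symm heq.symm (by omega)
      have h4 : α ^ (x ^ k * n) = α ^ (x ^ k' * n) := by
        rw [h3, h3, map_pow, map_pow]; rw [show (τ ^ k) α = (τ ^ k') α from heq]
      have h5 : x ^ k * n < x ^ k' * n := Nat.mul_lt_mul_of_pos_right (Nat.pow_lt_pow_right (by omega) hlt) hn
      apply hα (x ^ k' * n - x ^ k * n) (by omega)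
      have e1 : α ^ (x ^ k * n) * α ^ (x ^ k' * n - x ^ k * n) = α ^ (x ^ k * n) := by
        rw [← pow_add, Nat.add_sub_cancel' h5.le, h4]
      exact mul_left_cancel₀ (pow_ne_zero _ h0) (e1.trans (mul_one _).symm)
  have hfin2 : (⋃ α' ∈ {α' : A | ∃ τ : A ≃ₐ[ℚ] A, τ α = α'}, {b : ℕ | 0 < b ∧ ∃ δ : M, (δ:A) ^ b = α ^ x / α'}).Finite := by
    apply hconj.biUnion
    rintro _ ⟨τ, rfl⟩
    exact hmain τ
  refine hfin2.subset ?_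
  rintro b ⟨hb, hxb, β, hβ, hβM⟩
  have : NeZero b := ⟨hb.ne'⟩
  have : NeZero (b : A) := ⟨by exact_mod_cast hb.ne'⟩
  obtain ⟨ζ, hζ⟩ := HasEnoughRootsOfUnity.exists_primitiveRoot A b
  have hζx : IsPrimitiveRoot (ζ ^ x) b := hζ.pow_of_coprime x hxb
  have hcr : IsConjRoot ℚ (ζ ^ x) ζ := by
    rw [IsConjRoot, ← Polynomial.cyclotomic_eq_minpoly_rat hζ hb, ← Polynomial.cyclotomic_eq_minpoly_rat hζx hb]
  obtain ⟨τ, hτ⟩ := isConjRoot_iff_exists_algEquiv.mp hcr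
  have hβ0 : β ≠ 0 := by
    rintro rfl
    rw [zero_pow hb.ne'] at hβ
    exact h0 hβ.symm
  have hτβ : τ β ≠ 0 := by simpa using hβ0
  have hδM : β ^ x / τ β ∈ M := by
    rw [← InfiniteGalois.fixedField_fixingSubgroup M, IntermediateField.mem_fixedField_iff]
    intro σ hσ
    rw [IntermediateField.mem_fixingSubgroup_iff] at hσ
    have hκ : σ (τ β) = τ (σ β) := by
      have h1 : σ.symm (τ.symm (σ (τ β))) = β := by
        refine hβM (((τ.trans σ).trans τ.symm).trans σ.symm) ⟨fun y hy => ?_, fun n z hn hz => ?_⟩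
        · simp only [AlgEquiv.trans_apply]
          rw [hσ _ (hstab τ y hy), AlgEquiv.symm_apply_apply, AlgEquiv.symm_apply_eq, hσ y hy]
        · simp only [AlgEquiv.trans_apply]
          rw [aut_comm_root σ τ z n hn hz, AlgEquiv.symm_apply_apply, AlgEquiv.symm_apply_apply]
      rw [AlgEquiv.symm_apply_eq, AlgEquiv.symm_apply_eq] at h1
      exact h1
    obtain ⟨i, _, hi⟩ := hζ.eq_pow_of_pow_eq_one (ξ := σ β / β) (by
      rw [div_pow, ← map_pow, hβ, hσ α hαM, div_self h0])
    have hσβ : σ β = ζ ^ i * β := by rw [hi, div_mul_cancel₀ _ hβ0]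
    have hζ0 : ζ ≠ 0 := hζ.ne_zero hb.ne'
    rw [map_div₀, hκ, map_pow, hσβ, map_mul, map_pow, hτ, mul_pow, ← pow_mul, ← pow_mul, mul_comm i x]
    rw [mul_div_mul_left _ _ (pow_ne_zero _ hζ0)]
  simp only [Set.mem_iUnion]
  refine ⟨τ α, ⟨τ, rfl⟩, hb, ⟨_, hδM⟩, ?_⟩
  simp only
  rw [div_pow, ← map_pow, hβ, ← pow_mul, mul_comm, pow_mul, hβ]

lemma kummer_fin {A : Type} [Field A] [CharZero A] [Algebra ℚ A] [IsAlgClosed A] [Algebra.IsAlgebraic ℚ A]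
    (M : IntermediateField ℚ A) [FiniteDimensional ℚ M] [Normal ℚ M] (α : A) (hαM : α ∈ M) (h0 : α ≠ 0)
    (hα : ∀ n : ℕ, 0 < n → α ^ n ≠ 1) :
    {b : ℕ | 0 < b ∧ ∃ β : A, β ^ b = α ∧ ∀ σ ∈ MFix M, σ β = β}.Finite := by
  have h2 := kummer_x M α hαM h0 hα 2 le_rfl
  have h3 := kummer_x M α hαM h0 hα 3 (by norm_num)
  refine ((h2.prod h3).image (fun p => p.1 * p.2)).subset ?_
  rintro b ⟨hb, β, hβ, hβM⟩
  obtain ⟨k, m, hm, rfl⟩ := Nat.exists_eq_two_pow_mul_odd hb.ne'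
  refine ⟨(m, 2 ^ k), ⟨⟨hm.pos, ?_, β ^ (2^k), ?_, ?_⟩, ⟨by positivity, ?_, β ^ m, ?_, ?_⟩⟩, by simp [mul_comm]⟩
  · exact Nat.coprime_two_left.mpr hm
  · rw [← pow_mul, hβ]
  · intro σ hσ; rw [map_pow, hβM σ hσ]
  · exact Nat.Coprime.pow_right _ (by norm_num)
  · rw [← pow_mul, mul_comm, hβ]
  · intro σ hσ; rw [map_pow, hβM σ hσ]


open Classical in
lemma class_sum {ι A : Type*} [Field A] [Algebra ℚ A] (H : Set (A ≃ₐ[ℚ] A)) (γ : ι → A) (j0 : ι) (n : ℕ) :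
   ∀ (J : Finset ι) (_ : J.card = n) (lam : ι → A) (_ : ∀ j ∈ J, γ j ≠ 0) (_ : j0 ∈ J)
    (_ : ∀ σ ∈ H, ∀ j ∈ J, σ (lam j) = lam j)
    (_ : ∀ σ ∈ H, ∀ j ∈ J, ∀ τ ∈ H, τ (σ (γ j) / γ j) = σ (γ j) / γ j)
    (_ : ∑ j ∈ J, lam j * γ j = 0),
    ∑ j ∈ J with (∀ σ ∈ H, σ (γ j / γ j0) = γ j / γ j0), lam j * γ j = 0 := by
  induction n with
  | zero => intro J hJ lam _ hj0; rw [Finset.card_eq_zero] at hJ; simp [hJ] at hj0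
  | succ n ih =>
    intro J hJ lam hγ hj0 hlam hζ hsum
    by_cases hall : ∀ j ∈ J, ∀ σ ∈ H, σ (γ j / γ j0) = γ j / γ j0
    · rw [Finset.filter_true_of_mem hall]; exact hsum
    push Not at hall
    obtain ⟨j1, hj1, σ, hσ, hne⟩ := hall
    have hσγ : ∀ j ∈ J, σ (γ j) = σ (γ j) / γ j * γ j := fun j hj => by rw [div_mul_cancel₀ _ (hγ j hj)]
    have hj10 : j0 ≠ j1 := by
      rintro rfl
      rw [div_self (hγ _ hj0), map_one] at hne
      exact hne rfl
    have hz : σ (γ j0) / γ j0 ≠ σ (γ j1) / γ j1 := by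
      intro h
      apply hne
      rw [map_div₀, hσγ j1 hj1, hσγ j0 hj0, h, mul_div_mul_left]
      exact div_ne_zero (by simpa using hγ j1 hj1) (hγ j1 hj1)
    have h1 := ih (J.erase j1) (by rw [Finset.card_erase_of_mem hj1, hJ]; rfl)
      (fun j => (σ (γ j) / γ j - σ (γ j1) / γ j1) * lam j)
      (fun j hj => hγ j (Finset.mem_of_mem_erase hj)) (Finset.mem_erase.mpr ⟨hj10, hj0⟩)
      (fun τ hτ j hj => by
        have hj' := Finset.mem_of_mem_erase hj
        rw [map_mul, map_sub, hζ σ hσ j hj' τ hτ, hζ σ hσ j1 hj1 τ hτ, hlam τ hτ j hj'])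
      (fun τ hτ j hj => hζ τ hτ j (Finset.mem_of_mem_erase hj))
      (by
        have e1 : ∑ j ∈ J, (σ (γ j) / γ j - σ (γ j1) / γ j1) * lam j * γ j = 0 := by
          have e2 : ∑ j ∈ J, (σ (γ j) / γ j) * lam j * γ j = 0 := by
            have := congrArg σ hsum
            rw [map_sum, map_zero] at this
            rw [← this]
            refine Finset.sum_congr rfl fun j hj => ?_
            rw [map_mul, hlam σ hσ j hj, hσγ j hj]
            field_simp [hγ j hj]
          calc _ = ∑ j ∈ J, (σ (γ j) / γ j) * lam j * γ j - σ (γ j1) / γ j1 * ∑ j ∈ J, lam j * γ j := by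
                rw [Finset.mul_sum, ← Finset.sum_sub_distrib]
                exact Finset.sum_congr rfl fun j _ => by ring
            _ = 0 := by rw [e2, hsum]; ring
        rw [← e1, ← Finset.sum_erase_add _ _ hj1]; simp)
    have h2 : ((J.erase j1).filter fun j => ∀ σ ∈ H, σ (γ j / γ j0) = γ j / γ j0) =
        (J.filter fun j => ∀ σ ∈ H, σ (γ j / γ j0) = γ j / γ j0) := by
      ext j
      simp only [Finset.mem_filter, Finset.mem_erase]
      constructor
      · rintro ⟨⟨_, h⟩, h'⟩; exact ⟨h, h'⟩
      · rintro ⟨h, h'⟩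
        refine ⟨⟨?_, h⟩, h'⟩
        rintro rfl
        exact hne (h' σ hσ)
    rw [h2] at h1
    have h3 : ∑ j ∈ J with (∀ σ ∈ H, σ (γ j / γ j0) = γ j / γ j0), (σ (γ j) / γ j - σ (γ j1) / γ j1) * lam j * γ j
      = (σ (γ j0) / γ j0 - σ (γ j1) / γ j1) * ∑ j ∈ J with (∀ σ ∈ H, σ (γ j / γ j0) = γ j / γ j0), lam j * γ j := by
      rw [Finset.mul_sum]
      refine Finset.sum_congr rfl fun j hj => ?_
      rw [Finset.mem_filter] at hj
      have e3 : σ (γ j) / γ j = σ (γ j0) / γ j0 := by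
        have e4 := hj.2 σ hσ
        have a1 := hγ j hj.1
        have a2 := hγ j0 hj0
        have a3 : σ (γ j0) ≠ 0 := by simpa using a2
        rw [map_div₀, div_eq_div_iff a3 a2] at e4
        rw [div_eq_div_iff a1 a2, e4]; ring
      rw [e3, mul_assoc]
    rw [h3] at h1
    exact (mul_eq_zero.mp h1).resolve_left (sub_ne_zero.mpr hz)


def SameCls (x y : ℂ) : Prop := ∃ r : ℚ, x - y = 2 * Real.pi * Complex.I * r

lemma exp_pow_sameCls {w : ℂ} (n : ℕ) (hn : 0 < n) (h : Complex.exp w ^ n = 1) : ∃ r : ℚ, w = 2 * Real.pi * Complex.I * r := by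
  rw [← Complex.exp_nat_mul, Complex.exp_eq_one_iff] at h
  obtain ⟨k, hk⟩ := h
  have hn' : (n:ℂ) ≠ 0 := by exact_mod_cast hn.ne'
  refine ⟨(k:ℚ)/n, ?_⟩
  push_cast
  field_simp
  linear_combination hk

lemma exp_rat_pow (a : ℂ) (q : ℚ) : Complex.exp (q * a) ^ q.den = Complex.exp a ^ q.num := by
  rw [← Complex.exp_nat_mul, ← Complex.exp_int_mul]
  congr 1
  have h := Rat.den_mul_eq_num q
  have h2 : ((q.den : ℂ)) * (q:ℂ) = q.num := by exact_mod_cast h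
  rw [← mul_assoc, h2]

lemma exp_cls_pow (r : ℚ) : Complex.exp (2 * Real.pi * Complex.I * r) ^ r.den = 1 := by
  have := exp_rat_pow (2 * Real.pi * Complex.I) r
  rw [Complex.exp_two_pi_mul_I, one_zpow] at this
  rw [mul_comm]; exact this

lemma exp_rat_alg {a : ℂ} (ha : IsAlgebraic ℚ (Complex.exp a)) (q : ℚ) : IsAlgebraic ℚ (Complex.exp (q * a)) := by
  apply IsAlgebraic.of_pow q.den_pos
  rw [exp_rat_pow]
  have h1 := mem_algebraicClosure_iff.mpr ha
  exact mem_algebraicClosure_iff.mp (zpow_mem h1 _)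

open Classical in
lemma thmQ_den {ι : Type*} (J : Finset ι) (lam a : ι → ℂ) (hl : ∀ j ∈ J, IsAlgebraic ℚ (lam j))
    (hα : ∀ j ∈ J, IsAlgebraic ℚ (Complex.exp (a j))) (j0 : ι) (hj0 : j0 ∈ J) (b : ℕ) :
    {q : ℚ | (∑ j ∈ J, lam j * Complex.exp (q * a j) = 0 ∧
      ∑ j ∈ J with SameCls (a j) (a j0), lam j * Complex.exp (q * a j) ≠ 0) ∧ q.den = b}.Finite := by
  have hb : ∀ j ∈ J, IsAlgebraic ℚ (Complex.exp (((1:ℚ)/b : ℚ) * a j)) := fun j hj => exp_rat_alg (hα j hj) _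
  have h1 := thmZ J lam (fun j => Complex.exp (((1:ℚ)/b : ℚ) * a j)) hl hb (fun _ _ => Complex.exp_ne_zero _) j0 hj0
  refine (h1.image (fun n : ℤ => (n:ℚ)/b)).subset ?_
  rintro q ⟨⟨h2, h3⟩, rfl⟩
  have hden : (q.den : ℂ) ≠ 0 := by exact_mod_cast q.den_nz
  have hterm : ∀ j, Complex.exp (((1:ℚ)/q.den : ℚ) * a j) ^ q.num = Complex.exp (q * a j) := by
    intro j
    rw [← Complex.exp_int_mul]
    congr 1
    conv_rhs => rw [← Rat.num_div_den q]
    push_cast; ring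
  refine ⟨q.num, ⟨?_, ?_⟩, Rat.num_div_den q⟩
  · simp_rw [hterm]; exact h2
  · simp_rw [hterm]
    convert h3 using 4 with j hj
    constructor
    · rintro ⟨e, he, h⟩
      obtain ⟨r, hr⟩ := exp_pow_sameCls (w := ((1:ℚ)/q.den : ℚ) * a j - ((1:ℚ)/q.den : ℚ) * a j0) e he (by
        rw [Complex.exp_sub, div_pow, h, div_self (pow_ne_zero _ (Complex.exp_ne_zero _))])
      refine ⟨q.den * r, ?_⟩
      push_cast at hr ⊢
      field_simp at hr
      linear_combination hr
    · rintro ⟨r, hr⟩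
      refine ⟨(r/q.den).den, Rat.den_pos _, ?_⟩
      have := exp_cls_pow (r/q.den)
      have e1 : (2 * Real.pi * Complex.I * (r/q.den : ℚ) : ℂ) = ((1:ℚ)/q.den : ℚ) * a j - ((1:ℚ)/q.den : ℚ) * a j0 := by
        push_cast; field_simp; linear_combination -hr
      rw [e1, Complex.exp_sub, div_pow, div_eq_one_iff_eq (pow_ne_zero _ (Complex.exp_ne_zero _))] at this
      exact this

open Classical in
lemma thmQ_alg {ι : Type*} (J : Finset ι) (lam a : ι → ℂ) (hl : ∀ j ∈ J, IsAlgebraic ℚ (lam j))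
    (hα : ∀ j ∈ J, IsAlgebraic ℚ (Complex.exp (a j))) (j0 : ι) (hj0 : j0 ∈ J) :
    {q : ℚ | ∑ j ∈ J, lam j * Complex.exp (q * a j) = 0 ∧
      ∑ j ∈ J with SameCls (a j) (a j0), lam j * Complex.exp (q * a j) ≠ 0}.Finite := by
  let A := algebraicClosure ℚ ℂ
  have hAc : IsAlgClosure ℚ A := algebraicClosure.isAlgClosure ℚ ℂ
  have : IsAlgClosed A := hAc.isAlgClosed
  have : Normal ℚ A := IsAlgClosure.normal ℚ A
  let l : ι → A := fun j => if h : j ∈ J then ⟨lam j, mem_algebraicClosure_iff.mpr (hl j h)⟩ else 0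
  let γ : ℚ → ι → A := fun q j => if h : j ∈ J then ⟨Complex.exp (q * a j), mem_algebraicClosure_iff.mpr (exp_rat_alg (hα j h) q)⟩ else 1
  have hlv : ∀ j ∈ J, (l j : ℂ) = lam j := fun j hj => by simp [l, hj]
  have hγv : ∀ q, ∀ j ∈ J, (γ q j : ℂ) = Complex.exp (q * a j) := fun q j hj => by simp [γ, hj]
  have hγ0 : ∀ q, ∀ j ∈ J, γ q j ≠ 0 := fun q j hj h => by
    have := hγv q j hj
    rw [h] at this
    exact Complex.exp_ne_zero _ this.symm
  have hγd : ∀ q : ℚ, ∀ j ∈ J, γ q j ^ q.den = γ 1 j ^ q.num := fun q j hj => by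
    apply Subtype.ext
    have e0 : ((γ 1 j ^ q.num : A) : ℂ) = (γ 1 j : ℂ) ^ q.num := map_zpow₀ A.val _ _
    rw [e0, hγv 1 j hj]
    push_cast
    rw [hγv q j hj, exp_rat_pow]; simp
  let S : Set A := l '' J ∪ γ 1 '' J
  have hSfin : S.Finite := (J.finite_toSet.image _).union (J.finite_toSet.image _)
  let M0 := IntermediateField.adjoin ℚ S
  have : Finite S := hSfin
  have hM0 : FiniteDimensional ℚ M0 := IntermediateField.finiteDimensional_adjoin
    (fun x _ => Algebra.IsIntegral.isIntegral x)
  let M := IntermediateField.normalClosure ℚ M0 A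
  have hSM : S ⊆ M := (IntermediateField.subset_adjoin ℚ S).trans (IntermediateField.le_normalClosure M0)
  have hlM : ∀ j ∈ J, l j ∈ M := fun j hj => hSM (Or.inl ⟨j, hj, rfl⟩)
  have hγM : ∀ j ∈ J, γ 1 j ∈ M := fun j hj => hSM (Or.inr ⟨j, hj, rfl⟩)
  have hMf : FiniteDimensional ℚ M := inferInstance
  have hMn : Normal ℚ M := normalClosure.normal ℚ M0 A
  -- class sums vanish
  have hcls : ∀ q : ℚ, ∑ j ∈ J, lam j * Complex.exp (q * a j) = 0 →
      ∑ j ∈ J with (∀ σ ∈ MFix M, σ (γ q j / γ q j0) = γ q j / γ q j0), lam j * Complex.exp (q * a j) = 0 := by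
    intro q hq
    have h1 := class_sum (MFix M) (γ q) j0 _ J rfl l (hγ0 q) hj0 (fun σ hσ j hj => hσ.1 _ (hlM j hj))
      (fun σ hσ j hj τ hτ => by
        apply hτ.2 q.den _ q.den_pos
        rw [div_pow, ← map_pow, hγd q j hj, hσ.1 _ (zpow_mem (hγM j hj) _),
          div_self (zpow_ne_zero _ (hγ0 1 j hj))])
      (by
        apply Subtype.ext
        push_cast
        rw [← hq]
        exact Finset.sum_congr rfl fun j hj => by rw [hlv j hj, hγv q j hj])
    have h2 := congrArg (Subtype.val) h1
    push_cast at h2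
    rw [← h2]
    refine Finset.sum_congr rfl fun j hj => ?_
    rw [Finset.mem_filter] at hj
    rw [hlv j hj.1, hγv q j hj.1]
  have hB : ∀ j ∈ J, ¬ SameCls (a j) (a j0) → {b : ℕ | 0 < b ∧ ∃ β : A, β ^ b = γ 1 j / γ 1 j0 ∧ ∀ σ ∈ MFix M, σ β = β}.Finite := by
    intro j hj hns
    apply kummer_fin M
    · exact M.div_mem (hγM j hj) (hγM j0 hj0)
    · exact div_ne_zero (hγ0 1 j hj) (hγ0 1 j0 hj0)
    · intro n hn h
      apply hns
      have h1 := congrArg (Subtype.val) h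
      push_cast at h1
      rw [hγv 1 j hj, hγv 1 j0 hj0] at h1
      refine exp_pow_sameCls n hn ?_
      rw [Complex.exp_sub]; simpa using h1
  have hfin : (⋃ j ∈ {j | j ∈ J ∧ ¬ SameCls (a j) (a j0)}, ⋃ b ∈ {b : ℕ | 0 < b ∧ ∃ β : A, β ^ b = γ 1 j / γ 1 j0 ∧ ∀ σ ∈ MFix M, σ β = β},
     {q : ℚ | (∑ j ∈ J, lam j * Complex.exp (q * a j) = 0 ∧
      ∑ j ∈ J with SameCls (a j) (a j0), lam j * Complex.exp (q * a j) ≠ 0) ∧ q.den = b}).Finite := by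
    refine Set.Finite.biUnion (J.finite_toSet.subset (fun j hj => hj.1)) fun j hj => ?_
    refine Set.Finite.biUnion (hB j hj.1 hj.2) fun b _ => ?_
    exact thmQ_den J lam a hl hα j0 hj0 b
  refine hfin.subset ?_
  intro q hq
  have hex : ∃ j ∈ J, ¬ SameCls (a j) (a j0) ∧ ∀ σ ∈ MFix M, σ (γ q j / γ q j0) = γ q j / γ q j0 := by
    by_contra hcon
    push Not at hcon
    apply hq.2
    rw [← hcls q hq.1]
    refine Finset.sum_congr (Finset.filter_congr fun j hj => ⟨?_, ?_⟩) fun _ _ => rfl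
    · rintro ⟨r, hr⟩ σ hσ
      refine hσ.2 (q * r).den _ (Rat.den_pos _) ?_
      apply Subtype.ext
      push_cast
      rw [hγv q j hj, hγv q j0 hj0, ← Complex.exp_sub, ← mul_sub, hr, ← exp_cls_pow (q * r)]
      congr 2
      push_cast; ring
    · intro h
      by_contra hns
      obtain ⟨σ, hσ, hne⟩ := hcon j hj hns
      exact hne (h σ hσ)
  obtain ⟨j, hj, hns, hfix⟩ := hex
  simp only [Set.mem_iUnion]
  refine ⟨j, ⟨hj, hns⟩, q.den, ⟨q.den_pos, ?_⟩, hq, rfl⟩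
  have hcop : IsCoprime q.num (q.den : ℤ) := by
    rw [Int.isCoprime_iff_gcd_eq_one]; exact q.reduced
  obtain ⟨u, v, huv⟩ := hcop
  set α := γ 1 j / γ 1 j0 with hαdef
  have hα0 : α ≠ 0 := div_ne_zero (hγ0 1 j hj) (hγ0 1 j0 hj0)
  have hαM : α ∈ M := M.div_mem (hγM j hj) (hγM j0 hj0)
  refine ⟨(γ q j / γ q j0) ^ u * α ^ v, ?_, ?_⟩
  · have e1 : (γ q j / γ q j0) ^ q.den = α ^ q.num := by rw [div_pow, hγd q j hj, hγd q j0 hj0, div_zpow]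
    have e2 : ((γ q j / γ q j0) ^ u) ^ q.den = (α ^ q.num) ^ u := by
      rw [← e1, ← zpow_natCast, ← zpow_natCast, ← zpow_mul, ← zpow_mul, mul_comm]
    rw [mul_pow, e2, ← zpow_natCast (α ^ v), ← zpow_mul, ← zpow_mul, ← zpow_add₀ hα0, mul_comm q.num u, huv, zpow_one]
  · intro σ hσ
    rw [map_mul, map_zpow₀, map_zpow₀, hfix σ hσ, hσ.1 α hαM]

open Classical in
lemma thmQ {ι : Type*} (J : Finset ι) (lam a : ι → ℂ)
    (hα : ∀ j ∈ J, IsAlgebraic ℚ (Complex.exp (a j))) (j0 : ι) (hj0 : j0 ∈ J) :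
    {q : ℚ | ∑ j ∈ J, lam j * Complex.exp (q * a j) = 0 ∧
      ∑ j ∈ J with SameCls (a j) (a j0), lam j * Complex.exp (q * a j) ≠ 0}.Finite := by
  let A := algebraicClosure ℚ ℂ
  let B := Module.Basis.ofVectorSpace A ℂ
  set T := J.biUnion (fun j => (B.repr (lam j)).support) with hT
  have hfin : (⋃ t ∈ T, {q : ℚ | ∑ j ∈ J, (B.repr (lam j) t : ℂ) * Complex.exp (q * a j) = 0 ∧
      ∑ j ∈ J with SameCls (a j) (a j0), (B.repr (lam j) t : ℂ) * Complex.exp (q * a j) ≠ 0}).Finite := by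
    refine Set.Finite.biUnion T.finite_toSet fun t _ => ?_
    exact thmQ_alg J _ a (fun j _ => mem_algebraicClosure_iff.mp (B.repr (lam j) t).2) hα j0 hj0
  refine hfin.subset ?_
  rintro q ⟨h1, h2⟩
  have key : ∀ J' ⊆ J, ∀ t, ((B.repr (∑ j ∈ J', lam j * Complex.exp (q * a j)) t : A) : ℂ) =
      ∑ j ∈ J', (B.repr (lam j) t : ℂ) * Complex.exp (q * a j) := by
    intro J' hJ' t
    have e1 : ∀ (j : ι) (hj : j ∈ J'), lam j * Complex.exp (q * a j) =
        (⟨Complex.exp (q * a j), mem_algebraicClosure_iff.mpr (exp_rat_alg (hα j (hJ' hj)) q)⟩ : A) • lam j := by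
      intro j hj
      rw [mul_comm]; rfl
    rw [map_sum, Finsupp.finsetSum_apply]
    push_cast
    refine Finset.sum_congr rfl fun j hj => ?_
    rw [e1 j hj, map_smul, Finsupp.smul_apply, smul_eq_mul, mul_comm]
    rfl
  by_contra hcon
  simp only [Set.mem_iUnion, not_exists] at hcon
  apply h2
  rw [← B.repr.map_eq_zero_iff]
  ext t
  rw [key _ (Finset.filter_subset _ _)]
  by_cases ht : t ∈ T
  · by_contra hne
    refine hcon t ht ⟨?_, hne⟩
    rw [← key J subset_rfl, h1]; simp
  · simp only [Finsupp.coe_zero, Pi.zero_apply, ZeroMemClass.coe_zero]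
    refine Finset.sum_eq_zero fun j hj => ?_
    have : B.repr (lam j) t = 0 := by
      by_contra h
      exact ht (Finset.mem_biUnion.mpr ⟨j, (Finset.mem_filter.mp hj).1, Finsupp.mem_support_iff.mpr h⟩)
    rw [this]; simp


lemma lift_aux {R A B : Type} [CommRing R] [CommRing A] [CommRing B] [Algebra R A]
    [Algebra.FormallySmooth R A] (φ : R →+* B) (π : B →+* A) (hs : Function.Surjective π)
    (hn' : ∀ a b, π a = 0 → π b = 0 → a * b = 0) (hc : ∀ r, π (φ r) = algebraMap R A r) :
    ∃ ψ : A →+* B, (∀ a, π (ψ a) = a) ∧ ∀ r, ψ (algebraMap R A r) = φ r := by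
  have hn : IsNilpotent (RingHom.ker π) := by
    refine ⟨2, ?_⟩
    rw [pow_two, Ideal.zero_eq_bot, eq_bot_iff, Ideal.mul_le]
    intro a ha b hb
    rw [Ideal.mem_bot]
    exact hn' a b ha hb
  let := φ.toAlgebra
  let π' : B →ₐ[R] A := { π with commutes' := hc }
  refine ⟨(Algebra.FormallySmooth.liftOfSurjective (AlgHom.id R A) π' hs hn : A →ₐ[R] B), ?_, ?_⟩
  · intro a
    exact Algebra.FormallySmooth.liftOfSurjective_apply (AlgHom.id R A) π' hs hn a
  · intro r
    exact AlgHom.commutes _ r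

lemma smooth_aux {K : Type} [Field K] [CharZero K] [Algebra K ℂ] : Algebra.FormallySmooth K ℂ := by
  obtain ⟨s, hs⟩ := exists_isTranscendenceBasis K ℂ
  have h1 : Algebra.IsAlgebraic (IntermediateField.adjoin K (Set.range ((↑) : s → ℂ))) ℂ :=
    hs.isAlgebraic_field
  exact Algebra.FormallySmooth.of_algebraicIndependent_of_isSeparable hs.1

lemma smooth_x (x : ℂ) (hx : Transcendental ℚ x) :
    letI := ((Polynomial.aeval x).toRingHom : Polynomial ℚ →+* ℂ).toAlgebra
    Algebra.FormallySmooth (Polynomial ℚ) ℂ := by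
  let := ((Polynomial.aeval x).toRingHom : Polynomial ℚ →+* ℂ).toAlgebra
  have hinj : Function.Injective (algebraMap (Polynomial ℚ) ℂ) :=
    transcendental_iff_injective.1 hx
  have : FaithfulSMul (Polynomial ℚ) ℂ := (faithfulSMul_iff_algebraMap_injective _ _).2 hinj
  let := FractionRing.liftAlgebra (Polynomial ℚ) ℂ
  have : Algebra.FormallySmooth (FractionRing (Polynomial ℚ)) ℂ := smooth_aux
  have : Algebra.FormallyEtale (Polynomial ℚ) (FractionRing (Polynomial ℚ)) :=
    Algebra.FormallyEtale.of_isLocalization (nonZeroDivisors (Polynomial ℚ))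
  exact Algebra.FormallySmooth.comp (Polynomial ℚ) (FractionRing (Polynomial ℚ)) ℂ

lemma exists_der (x : ℂ) (hx : Transcendental ℚ x) : ∃ D : Derivation ℚ ℂ ℂ, D x = 1 := by
  let := ((Polynomial.aeval x).toRingHom : Polynomial ℚ →+* ℂ).toAlgebra
  have := smooth_x x hx
  let φ : Polynomial ℚ →+* TrivSqZeroExt ℂ ℂ :=
    (Polynomial.aeval (TrivSqZeroExt.inl x + TrivSqZeroExt.inr 1 : TrivSqZeroExt ℂ ℂ)).toRingHom
  let π : TrivSqZeroExt ℂ ℂ →+* ℂ := (TrivSqZeroExt.fstHom ℂ ℂ ℂ).toRingHom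
  have hc : ∀ r, π (φ r) = algebraMap (Polynomial ℚ) ℂ r := by
    intro r
    have : (π.comp φ) = (Polynomial.aeval x).toRingHom := by
      refine Polynomial.ringHom_ext' (Subsingleton.elim _ _) ?_
      simp [π, φ]
    exact congrArg (fun f => f r) this
  have hn : ∀ a b, π a = 0 → π b = 0 → a * b = 0 := by
    intro a b ha hb
    have ha' : a.fst = 0 := ha
    have hb' : b.fst = 0 := hb
    ext
    · rw [TrivSqZeroExt.fst_mul, ha']; simp
    · rw [TrivSqZeroExt.snd_mul, ha', hb']; simp
  obtain ⟨ψ, h1, h2⟩ := lift_aux φ π (fun a => ⟨TrivSqZeroExt.inl a, by simp [π]⟩) hn hc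
  · have hf : ∀ a, (ψ a).fst = a := h1
    refine ⟨{ toFun := fun a => (ψ a).snd, map_add' := fun a b => by rw [map_add]; rfl, map_smul' := ?_, map_one_eq_zero' := ?_, leibniz' := ?_ }, ?_⟩
    · intro m a
      have : ψ (m • a) = m • ψ a := by
        exact map_rat_smul ψ m a
      simp [this]
    · show (ψ 1).snd = 0
      rw [map_one, TrivSqZeroExt.snd_one]
    · intro a b
      show (ψ (a*b)).snd = _
      rw [map_mul, TrivSqZeroExt.snd_mul, hf, hf]
      simp [mul_comm]
    · show (ψ x).snd = 1
      have := h2 Polynomial.X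
      have h3 : algebraMap (Polynomial ℚ) ℂ Polynomial.X = x := Polynomial.aeval_X x
      rw [h3] at this
      rw [this]
      simp [φ]

lemma exists_der_fin (E : Finset ℂ) :
    ∃ D : Derivation ℚ ℂ ℂ, ∀ x ∈ E, D x = 0 → IsAlgebraic ℚ x := by
  classical
  induction E using Finset.induction_on with
  | empty => exact ⟨0, by simp⟩
  | insert a E ha ih =>
    obtain ⟨D, hD⟩ := ih
    by_cases h : IsAlgebraic ℚ a
    · refine ⟨D, ?_⟩
      intro x hx hx0
      rcases Finset.mem_insert.1 hx with rfl | hx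
      · exact h
      · exact hD x hx hx0
    · obtain ⟨D1, hD1⟩ := exists_der a h
      -- avoid c with c * D x + D1 x = 0
      obtain ⟨c, hc⟩ := Infinite.exists_notMem_finset
        ((insert a E).image (fun x => - D1 x / D x))
      refine ⟨c • D + D1, ?_⟩
      intro x hx hx0
      have hx0' : c * D x + D1 x = 0 := by simpa using hx0
      have key : D x = 0 := by
        by_contra hne
        apply hc
        rw [Finset.mem_image]
        refine ⟨x, hx, ?_⟩
        field_simp
        linear_combination -hx0'
      rcases Finset.mem_insert.1 hx with rfl | hx
      · rw [key, hD1] at hx0'; simp at hx0'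
      · exact hD x hx key


noncomputable def constF (D : Derivation ℚ ℂ ℂ) : Subfield ℂ where
  carrier := {x | D x = 0}
  mul_mem' := by
    intro a b ha hb
    have ha' : D a = 0 := ha
    have hb' : D b = 0 := hb
    show D (a * b) = 0
    simp [ha', hb']
  one_mem' := by
    show D 1 = 0
    simp
  add_mem' := by
    intro a b ha hb
    have ha' : D a = 0 := ha
    have hb' : D b = 0 := hb
    show D (a + b) = 0
    simp [ha', hb']
  zero_mem' := by
    show D 0 = 0
    simp
  neg_mem' := by
    intro a ha
    have ha' : D a = 0 := ha
    show D (-a) = 0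
    simp [ha']
  inv_mem' := by
    intro a ha
    have ha' : D a = 0 := ha
    show D (a⁻¹) = 0
    rw [Derivation.leibniz_inv, ha']; simp

lemma mem_constF {D : Derivation ℚ ℂ ℂ} {x : ℂ} : x ∈ constF D ↔ D x = 0 := Iff.rfl

noncomputable def derLin (D : Derivation ℚ ℂ ℂ) : ℂ →ₗ[constF D] ℂ where
  toFun := D
  map_add' := by simp
  map_smul' := by
    intro c x
    have hc : D (c : ℂ) = 0 := c.2
    show D ((c : ℂ) * x) = (c : ℂ) * D x
    simp [hc]

def Bdd (D : Derivation ℚ ℂ ℂ) (S : Set ℂ) (φ : ℂ → ℂ) : Prop :=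
  ∃ W : Submodule (constF D) ℂ, W.FG ∧ ∀ s ∈ S, φ s ∈ W

lemma Bdd.mono {D S T φ} (h : Bdd D S φ) (hT : T ⊆ S) : Bdd D T φ := by
  obtain ⟨W, hW, h⟩ := h
  exact ⟨W, hW, fun s hs => h s (hT hs)⟩

lemma Bdd.congr {D S φ ψ} (h : Bdd D S φ) (hT : ∀ s ∈ S, ψ s = φ s) : Bdd D S ψ := by
  obtain ⟨W, hW, h⟩ := h
  exact ⟨W, hW, fun s hs => by rw [hT s hs]; exact h s hs⟩

lemma Bdd.add {D S φ ψ} (h : Bdd D S φ) (h' : Bdd D S ψ) : Bdd D S (fun s => φ s + ψ s) := by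
  obtain ⟨W, hW, h⟩ := h
  obtain ⟨W', hW', h'⟩ := h'
  exact ⟨W ⊔ W', hW.sup hW', fun s hs => Submodule.add_mem_sup (h s hs) (h' s hs)⟩

lemma Bdd.mul {D S φ ψ} (h : Bdd D S φ) (h' : Bdd D S ψ) : Bdd D S (fun s => φ s * ψ s) := by
  obtain ⟨W, hW, h⟩ := h
  obtain ⟨W', hW', h'⟩ := h'
  exact ⟨W * W', hW.mul hW', fun s hs => Submodule.mul_mem_mul (h s hs) (h' s hs)⟩

lemma Bdd.const (D S) (c : ℂ) : Bdd D S (fun _ => c) :=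
  ⟨Submodule.span _ {c}, Submodule.fg_span (Set.finite_singleton c), fun _ _ =>
    Submodule.mem_span_singleton_self c⟩

lemma Bdd.of_mem {D S φ} (h : ∀ s ∈ S, D (φ s) = 0) : Bdd D S φ := by
  refine ⟨Submodule.span _ {1}, Submodule.fg_span (Set.finite_singleton 1), fun s hs => ?_⟩
  rw [Submodule.mem_span_singleton]
  exact ⟨⟨φ s, h s hs⟩, by rw [Subfield.smul_def]; simp⟩

lemma Bdd.sub {D S φ ψ} (h : Bdd D S φ) (h' : Bdd D S ψ) : Bdd D S (fun s => φ s - ψ s) := by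
  have := h.add ((Bdd.const D S (-1)).mul h')
  exact this.congr (fun s _ => by ring)

lemma Bdd.der {D S φ} (h : Bdd D S φ) : Bdd D S (fun s => D (φ s)) := by
  obtain ⟨W, hW, h⟩ := h
  exact ⟨W.map (derLin D), hW.map _, fun s hs => ⟨φ s, h s hs, rfl⟩⟩

lemma Bdd.sum {ι : Type*} {D S} (J : Finset ι) (φ : ι → ℂ → ℂ) (h : ∀ j ∈ J, Bdd D S (φ j)) :
    Bdd D S (fun s => ∑ j ∈ J, φ j s) := by
  classical
  induction J using Finset.induction_on with
  | empty => simpa using Bdd.const D S 0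
  | insert a J ha ih =>
    have := (h a (by simp)).add (ih (fun j hj => h j (by simp [hj])))
    exact this.congr (fun s _ => by rw [Finset.sum_insert ha])

lemma G_lemma (D : Derivation ℚ ℂ ℂ) {ι : Type*} : ∀ (n : ℕ) (J : Finset ι), J.card = n →
    ∀ (lam γ : ι → ℂ → ℂ) (S : Set ℂ), S.Infinite → J.Nonempty →
    (∀ j ∈ J, Bdd D S (lam j)) → (∀ j ∈ J, ∀ s ∈ S, lam j s ≠ 0) →
    (∀ j ∈ J, ∀ s ∈ S, γ j s ≠ 0) → (∀ j ∈ J, Bdd D S (fun s => D (γ j s) / γ j s)) →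
    (∀ s ∈ S, ∑ j ∈ J, lam j s * γ j s = 0) →
    ∃ i ∈ J, ∃ j ∈ J, i ≠ j ∧ ∃ S' ⊆ S, S'.Infinite ∧ ∃ A B : ℂ → ℂ, Bdd D S' A ∧ Bdd D S' B ∧
      ∀ s ∈ S', A s ≠ 0 ∧ B s ≠ 0 ∧ D ((γ i s * A s) / (γ j s * B s)) = 0 := by
  classical
  intro n
  induction n with
  | zero =>
    intro J hJ lam γ S hS hne
    rw [Finset.card_eq_zero] at hJ
    subst hJ; simp at hne
  | succ n ih =>
    intro J hJ lam γ S hS hne hb hl hγ hℓ h0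
    obtain ⟨j0, hj0⟩ := hne
    set J' := J.erase j0 with hJ'
    have hsub : ∀ j ∈ J', j ∈ J := fun j hj => Finset.mem_of_mem_erase hj
    let μ : ι → ℂ → ℂ := fun j s => lam j0 s * D (lam j s) - lam j s * D (lam j0 s)
      + lam j0 s * lam j s * (D (γ j s) / γ j s - D (γ j0 s) / γ j0 s)
    have hD : ∀ j ∈ J, ∀ s ∈ S, D ((γ j s * lam j s) / (γ j0 s * lam j0 s)) =
        μ j s * γ j s / (lam j0 s ^ 2 * γ j0 s) := by
      intro j hj s hs
      have a1 := hl j hj s hs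
      have a2 := hl j0 hj0 s hs
      have a3 := hγ j hj s hs
      have a4 := hγ j0 hj0 s hs
      rw [Derivation.leibniz_div]
      simp only [Derivation.leibniz, smul_eq_mul, μ]
      field_simp
      ring
    have hsum : ∀ s ∈ S, ∑ j ∈ J', μ j s * γ j s = 0 := by
      intro s hs
      have a2 := hl j0 hj0 s hs
      have a4 := hγ j0 hj0 s hs
      have e1 : ∑ j ∈ J, (γ j s * lam j s) / (γ j0 s * lam j0 s) = 0 := by
        rw [← Finset.sum_div]
        have := h0 s hs
        simp only [mul_comm (lam _ s)] at this
        rw [this, zero_div]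
      have e2 := congrArg D e1
      rw [map_sum, map_zero, Finset.sum_congr rfl (fun j hj => hD j hj s hs),
        ← Finset.sum_div] at e2
      have e3 : ∑ j ∈ J, μ j s * γ j s = 0 := by
        rcases div_eq_zero_iff.1 e2 with h | h
        · exact h
        · exact absurd h (by positivity)
      rw [← Finset.add_sum_erase _ _ hj0] at e3
      have e4 : μ j0 s = 0 := by simp only [μ]; ring
      rw [e4] at e3
      simpa using e3
    by_cases hex : ∃ j ∈ J', {s ∈ S | μ j s = 0}.Infinite
    · obtain ⟨j, hj, hinf⟩ := hex
      refine ⟨j, hsub j hj, j0, hj0, Finset.ne_of_mem_erase hj, _, Set.sep_subset _ _, hinf,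
        lam j, lam j0, (hb j (hsub j hj)).mono (Set.sep_subset _ _),
        (hb j0 hj0).mono (Set.sep_subset _ _), ?_⟩
      rintro s ⟨hs, hs0⟩
      refine ⟨hl j (hsub j hj) s hs, hl j0 hj0 s hs, ?_⟩
      rw [hD j (hsub j hj) s hs, hs0]; simp
    · push Not at hex
      have hfin : (⋃ j ∈ J', {s ∈ S | μ j s = 0}).Finite :=
        Set.Finite.biUnion J'.finite_toSet (fun j hj => Set.not_infinite.1 (by simpa using hex j hj))
      set S1 := S \ (⋃ j ∈ J', {s ∈ S | μ j s = 0}) with hS1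
      have hS1i : S1.Infinite := hS.sdiff hfin
      have hS1s : S1 ⊆ S := Set.sdiff_subset
      have hne' : J'.Nonempty := by
        by_contra hemp
        rw [Finset.not_nonempty_iff_eq_empty] at hemp
        obtain ⟨s, hs⟩ := hS.nonempty
        have := h0 s hs
        rw [← Finset.add_sum_erase _ _ hj0, ← hJ', hemp] at this
        simp [hl j0 hj0 s hs, hγ j0 hj0 s hs] at this
      have hc : J'.card = n := by rw [hJ', Finset.card_erase_of_mem hj0, hJ]; rfl
      have p1 : ∀ j ∈ J', Bdd D S1 (μ j) := by
        intro j hj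
        have b1 := (hb j (hsub j hj))
        have b2 := (hb j0 hj0)
        exact ((((b2.mul b1.der).sub (b1.mul b2.der)).add
          ((b2.mul b1).mul ((hℓ j (hsub j hj)).sub (hℓ j0 hj0))))).mono hS1s
      have p2 : ∀ j ∈ J', ∀ s ∈ S1, μ j s ≠ 0 := by
        intro j hj s hs h
        apply hs.2
        simp only [Set.mem_iUnion]
        exact ⟨j, hj, hs.1, h⟩
      obtain ⟨i, hi, j, hj, hij, S', hS', r⟩ := ih J' hc μ γ S1 hS1i hne' p1 p2
        (fun j hj s hs => hγ j (hsub j hj) s (hS1s hs))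
        (fun j hj => (hℓ j (hsub j hj)).mono hS1s) (fun s hs => hsum s (hS1s hs))
      exact ⟨i, hsub i hi, j, hsub j hj, hij, S', hS'.trans hS1s, r⟩


noncomputable def derC (D : Derivation ℚ ℂ ℂ) : Derivation (constF D) ℂ ℂ :=
  Derivation.mk' (derLin D) (fun a b => D.leibniz a b)

lemma const_of_integral (D : Derivation ℚ ℂ ℂ) (x : ℂ) (hx : IsIntegral (constF D) x) :
    D x = 0 := by
  have h1 := (derC D).map_aeval (minpoly (constF D) x) x
  rw [minpoly.aeval] at h1
  rw [map_zero] at h1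
  have h2 : Polynomial.aeval x (Polynomial.derivative (minpoly (constF D) x)) ≠ 0 :=
    (minpoly.irreducible hx).separable.aeval_derivative_ne_zero (minpoly.aeval _ _)
  have h3 := (smul_eq_zero.1 h1.symm).resolve_left h2
  exact h3

lemma const_of_val (D : Derivation ℚ ℂ ℂ) (x : ℂ)
    (hx : ∀ V : ValuationSubring ℂ, (constF D : Set ℂ) ⊆ V → x ∈ V) : D x = 0 := by
  apply const_of_integral
  have h := iInf_valuationSubring_superset (K := ℂ) (s := (constF D : Set ℂ))
  have h1 : x ∈ (⨅ V : {V : ValuationSubring ℂ // (constF D : Set ℂ) ⊆ V.toSubring},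
      V.1.toSubring) := by
    rw [Subring.mem_iInf]
    intro V
    exact hx V.1 V.2
  rw [h] at h1
  have h2 : IsIntegral (Subring.closure (constF D : Set ℂ)) x := h1
  have h3 : Subring.closure (constF D : Set ℂ) = (constF D).toSubring :=
    Subring.closure_eq (constF D).toSubring
  rw [h3] at h2
  exact h2

lemma val_const {D : Derivation ℚ ℂ ℂ} {V : ValuationSubring ℂ} (hV : (constF D : Set ℂ) ⊆ V)
    {c : ℂ} (hc : D c = 0) (h0 : c ≠ 0) : V.valuation c = 1 := by
  apply le_antisymm
  · rw [ValuationSubring.valuation_le_one_iff]; exact hV hc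
  · have : V.valuation c⁻¹ ≤ 1 := by
      rw [ValuationSubring.valuation_le_one_iff]
      exact hV ((constF D).inv_mem hc)
    rw [map_inv₀] at this
    have h := V.valuation.ne_zero_iff.2 h0
    exact (inv_le_one₀ (zero_lt_iff.2 h)).1 this

lemma finite_values {D : Derivation ℚ ℂ ℂ} {V : ValuationSubring ℂ}
    (hV : (constF D : Set ℂ) ⊆ V) (W : Submodule (constF D) ℂ) (hW : W.FG) :
    (V.valuation '' (W : Set ℂ)).Finite := by
  classical
  by_contra hinf
  have hinf' : ((V.valuation '' (W : Set ℂ)) \ {0}).Infinite :=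
    Set.Infinite.sdiff hinf (Set.finite_singleton 0)
  have : Module.Finite (constF D) W := Module.Finite.iff_fg.2 hW
  obtain ⟨t, ht, hcard⟩ := hinf'.exists_subset_card_eq (Module.finrank (constF D) W + 1)
  have hch : ∀ γ : t, ∃ x : W, V.valuation (x : ℂ) = γ := by
    intro γ
    obtain ⟨⟨x, hx, h⟩, -⟩ := ht γ.2
    exact ⟨⟨x, hx⟩, h⟩
  choose x hx using hch
  have hne : ∀ γ : t, (γ : V.ValueGroup) ≠ 0 := fun γ => (ht γ.2).2
  have hli : LinearIndependent (constF D) x := by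
    rw [linearIndependent_iff']
    intro s g hg i hi
    by_contra hgi
    set s' := s.filter (fun j => g j ≠ 0) with hs'
    have hne' : s'.Nonempty := ⟨i, by simp [hs', hi, hgi]⟩
    have hg' : ∑ j ∈ s', (g j : ℂ) * (x j : ℂ) = 0 := by
      have h1 := congrArg (fun y : W => (y : ℂ)) hg
      simp only [Submodule.coe_sum, Submodule.coe_smul, ZeroMemClass.coe_zero] at h1
      rw [hs', Finset.sum_filter_of_ne]
      · exact h1
      · intro j _ hj h0
        rw [h0] at hj; simp at hj
    obtain ⟨m, hm, hmax⟩ := s'.exists_max_image (fun j => (j : V.ValueGroup)) hne'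
    have hv : ∀ j ∈ s', V.valuation ((g j : ℂ) * (x j : ℂ)) = (j : V.ValueGroup) := by
      intro j hj
      have : (g j : ℂ) ≠ 0 := by
        have := (Finset.mem_filter.1 hj).2
        simpa using this
      rw [map_mul, val_const hV (g j).2 this, hx, one_mul]
    have h2 := V.valuation.map_sum_eq_of_lt (s := s') (f := fun j => (g j : ℂ) * (x j : ℂ)) hm ?_
    · rw [hg', map_zero, hv m hm] at h2
      exact hne m h2.symm
    · intro j hj
      rw [Finset.mem_sdiff, Finset.mem_singleton] at hj
      rw [hv m hm, hv j hj.1]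
      exact lt_of_le_of_ne (hmax j hj.1) (fun h => hj.2 (Subtype.ext h))
  have := hli.fintype_card_le_finrank
  rw [Fintype.card_coe, hcard] at this
  omega

lemma pigeon {α β : Type*} {S : Set α} (hS : S.Infinite) (f : α → β) (h : (f '' S).Finite) :
    ∃ b, {s ∈ S | f s = b}.Infinite := by
  by_contra hc
  push Not at hc
  apply hS
  refine Set.Finite.subset (h.biUnion (t := fun b => {s ∈ S | f s = b})
    (fun b _ => Set.not_infinite.1 (by simpa using hc b))) ?_
  intro s hs
  simp only [Set.mem_iUnion]
  exact ⟨f s, ⟨s, hs, rfl⟩, hs, rfl⟩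

lemma exp_val_sub (V : ValuationSubring ℂ) (w : ℂ) (T : Set ℂ)
    (hT : ∀ s ∈ T, ∀ s' ∈ T, V.valuation (Complex.exp (w * s)) = V.valuation (Complex.exp (w * s'))) :
    ∀ u ∈ Submodule.span ℚ {x | ∃ s ∈ T, ∃ s' ∈ T, x = s - s'},
      V.valuation (Complex.exp (w * u)) = 1 := by
  intro u hu
  induction hu using Submodule.span_induction with
  | mem x hx =>
    obtain ⟨s, hs, s', hs', rfl⟩ := hx
    rw [mul_sub, Complex.exp_sub, map_div₀, hT s hs s' hs', div_self]
    exact V.valuation.ne_zero_iff.2 (Complex.exp_ne_zero _)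
  | zero => simp
  | add x y _ _ hx hy => rw [mul_add, Complex.exp_add, map_mul, hx, hy, one_mul]
  | smul q x _ hx =>
    have hd : q.den ≠ 0 := q.den_ne_zero
    have hq : ((q.den : ℕ) : ℂ) * (q : ℂ) = (q.num : ℂ) := by
      exact_mod_cast Rat.den_mul_eq_num q
    have h1 : (V.valuation (Complex.exp (w * (q • x)))) ^ q.den = 1 := by
      rw [← map_pow, ← Complex.exp_nat_mul]
      have : ((q.den : ℕ) : ℂ) * (w * (q • x)) = (q.num : ℂ) * (w * x) := by
        rw [Rat.smul_def, ← hq]; ring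
      rw [this, Complex.exp_int_mul, map_zpow₀, hx, one_zpow]
    exact (pow_eq_one_iff.1 h1).resolve_right hd

def HU (S : Set ℂ) (U0 : Submodule ℚ ℂ) : Prop :=
  ∀ S' ⊆ S, S'.Infinite → Submodule.span ℚ {x | ∃ s ∈ S', ∃ s' ∈ S', x = s - s'} = U0

lemma val_step (D : Derivation ℚ ℂ ℂ) (S : Set ℂ) (hS : S.Infinite) (U0 : Submodule ℚ ℂ)
    (hU : HU S U0) (w : ℂ) (A B : ℂ → ℂ) (hA : Bdd D S A) (hB : Bdd D S B)
    (h : ∀ s ∈ S, A s ≠ 0 ∧ B s ≠ 0 ∧ D (Complex.exp (w * s) * A s / B s) = 0) :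
    ∀ u ∈ U0, D (Complex.exp (w * u)) = 0 := by
  intro u hu
  apply const_of_val
  intro V hV
  obtain ⟨WA, hWA, hA⟩ := hA
  obtain ⟨WB, hWB, hB⟩ := hB
  have f1 : ((fun s => (V.valuation (A s), V.valuation (B s))) '' S).Finite := by
    refine Set.Finite.subset ((finite_values hV WA hWA).prod (finite_values hV WB hWB)) ?_
    rintro _ ⟨s, hs, rfl⟩
    exact ⟨⟨_, hA s hs, rfl⟩, ⟨_, hB s hs, rfl⟩⟩
  obtain ⟨⟨a, b⟩, hb⟩ := pigeon hS _ f1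
  have hsub : {s ∈ S | (V.valuation (A s), V.valuation (B s)) = (a, b)} ⊆ S := Set.sep_subset _ _
  rw [← hU _ hsub hb] at hu
  have hval := exp_val_sub V w _ ?_ u hu
  · rw [← ValuationSubring.valuation_le_one_iff, hval]
  · have hx : ∀ s ∈ S, V.valuation (Complex.exp (w * s)) = V.valuation (B s) / V.valuation (A s) := by
      intro s hs
      obtain ⟨h1, h2, h3⟩ := h s hs
      have h4 := val_const hV h3 (by simp [h1, h2])
      rw [map_div₀, map_mul] at h4
      have h1' := V.valuation.ne_zero_iff.2 h1
      have h2' := V.valuation.ne_zero_iff.2 h2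
      rw [div_eq_one_iff_eq h2'] at h4
      rw [eq_div_iff h1', h4]
    rintro s ⟨hs, e⟩ s' ⟨hs', e'⟩
    rw [hx s hs, hx s' hs']
    rw [Prod.mk.injEq] at e e'
    rw [e.1, e.2, e'.1, e'.2]


open Classical in
def Split (F : ℂ →₀ ℂ) (G : AddSubgroup ℂ) (s : ℂ) : Prop :=
  ∀ ν, ∑ μ ∈ F.support with μ - ν ∈ G, F μ * Complex.exp (μ * s) = 0

lemma Split.mono {F : ℂ →₀ ℂ} {G G' : AddSubgroup ℂ} {s : ℂ} (h : Split F G s)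
    (hG : ∀ μ ∈ F.support, ∀ μ' ∈ F.support, (μ - μ' ∈ G ↔ μ - μ' ∈ G')) : Split F G' s := by
  classical
  intro ν
  by_cases he : ∃ μ0 ∈ F.support, μ0 - ν ∈ G'
  · obtain ⟨μ0, h0, h1⟩ := he
    have := h μ0
    convert this using 2
    refine Finset.filter_congr ?_
    intro μ hμ
    rw [hG μ hμ μ0 h0]
    have e : μ - μ0 = (μ - ν) - (μ0 - ν) := by ring
    rw [e]
    exact ⟨fun h => G'.sub_mem h h1, fun h => by simpa using G'.add_mem h h1⟩
  · push Not at he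
    apply Finset.sum_eq_zero
    intro μ hμ
    rw [Finset.mem_filter] at hμ
    exact absurd hμ.2 (he μ hμ.1)

def WD (D : Derivation ℚ ℂ ℂ) (U0 : Submodule ℚ ℂ) : AddSubgroup ℂ where
  carrier := {w | ∀ u ∈ U0, D (Complex.exp (w * u)) = 0}
  zero_mem' := by intro u _; simp
  add_mem' := by
    intro a b ha hb u hu
    have h1 := ha u hu
    have h2 := hb u hu
    rw [add_mul, Complex.exp_add, D.leibniz, h1, h2]; simp
  neg_mem' := by
    intro a ha u hu
    have h1 := ha u hu
    rw [neg_mul, Complex.exp_neg, D.leibniz_inv, h1]; simp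

noncomputable def dlog (D : Derivation ℚ ℂ ℂ) (v : ℂ) : ℂ →+ ℂ where
  toFun u := D (Complex.exp (v * u)) / Complex.exp (v * u)
  map_zero' := by simp
  map_add' := by
    intro a b
    have h1 := Complex.exp_ne_zero (v * a)
    have h2 := Complex.exp_ne_zero (v * b)
    rw [mul_add, Complex.exp_add, D.leibniz]
    simp only [smul_eq_mul]
    field_simp
    ring

lemma sub_mem_U0 {S : Set ℂ} (hS : S.Infinite) {U0 : Submodule ℚ ℂ} (hU : HU S U0) {s s' : ℂ}
    (hs : s ∈ S) (hs' : s' ∈ S) : s - s' ∈ U0 := by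
  rw [← hU S subset_rfl hS]
  exact Submodule.subset_span ⟨s, hs, s', hs', rfl⟩

lemma dlog_bdd (D : Derivation ℚ ℂ ℂ) (v : ℂ) (S : Set ℂ) (hS : S.Infinite) (U0 : Submodule ℚ ℂ)
    (hfg : U0.FG) (hU : HU S U0) :
    Bdd D S (fun s => D (Complex.exp (v * s)) / Complex.exp (v * s)) := by
  obtain ⟨s0, hs0⟩ := hS.nonempty
  have h1 : Bdd D S (fun s => dlog D v (s - s0)) := by
    obtain ⟨t, ht⟩ := hfg
    refine ⟨Submodule.span _ (dlog D v '' t), Submodule.fg_span (t.finite_toSet.image _), ?_⟩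
    intro s hs
    have hm := sub_mem_U0 hS hU hs hs0
    rw [← ht] at hm
    show dlog D v (s - s0) ∈ _
    generalize s - s0 = u at hm
    induction hm using Submodule.span_induction with
    | mem x hx => exact Submodule.subset_span ⟨x, hx, rfl⟩
    | zero => simp
    | add x y _ _ hx hy => rw [map_add]; exact Submodule.add_mem _ hx hy
    | smul q x _ hx =>
      rw [map_rat_smul]
      have h2 : ((q : ℂ)) ∈ constF D := SubfieldClass.ratCast_mem _ q
      have h3 : q • dlog D v x = (⟨q, h2⟩ : constF D) • dlog D v x := by
        rw [Subfield.smul_def, Rat.smul_def]; rfl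
      rw [h3]
      exact Submodule.smul_mem _ _ hx
  refine (h1.add (Bdd.const D S (dlog D v s0))).congr ?_
  intro s _
  rw [← map_add, sub_add_cancel]
  rfl

lemma expw_bdd (D : Derivation ℚ ℂ ℂ) (w : ℂ) (S : Set ℂ) (hS : S.Infinite) (U0 : Submodule ℚ ℂ)
    (hU : HU S U0) (hw : w ∈ WD D U0) : Bdd D S (fun s => Complex.exp (w * s)) := by
  obtain ⟨s0, hs0⟩ := hS.nonempty
  have h1 : Bdd D S (fun s => Complex.exp (w * (s - s0))) :=
    Bdd.of_mem (fun s hs => hw _ (sub_mem_U0 hS hU hs hs0))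
  refine (h1.mul (Bdd.const D S (Complex.exp (w * s0)))).congr ?_
  intro s _
  rw [← Complex.exp_add]; congr 1; ring

lemma HU.mono {S T : Set ℂ} {U0} (hU : HU S U0) (h : T ⊆ S) : HU T U0 :=
  fun S' hS' hi => hU S' (hS'.trans h) hi

lemma step3D (D : Derivation ℚ ℂ ℂ) (S : Set ℂ) (U0 : Submodule ℚ ℂ)
    (hfg : U0.FG) (hU : HU S U0) (F : ℂ →₀ ℂ)
    (hF : ∀ s ∈ S, ∑ μ ∈ F.support, F μ * Complex.exp (μ * s) = 0) :
    {s ∈ S | ¬ Split F (WD D U0) s}.Finite := by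
  classical
  by_contra hinf
  set S1 := {s ∈ S | ¬ Split F (WD D U0) s} with hS1
  have hS1i : S1.Infinite := hinf
  have hS1s : S1 ⊆ S := Set.sep_subset _ _
  let π : ℂ → ℂ ⧸ WD D U0 := fun x => QuotientAddGroup.mk x
  have hπ : ∀ a b, π a = π b ↔ a - b ∈ WD D U0 := by
    intro a b
    rw [← neg_sub, neg_mem_iff, sub_eq_neg_add]
    exact QuotientAddGroup.eq
  let Cl := F.support.image π
  let Sg : (ℂ ⧸ WD D U0) → ℂ → ℂ := fun c s => ∑ μ ∈ F.support with π μ = c, F μ * Complex.exp (μ * s)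
  have hpat : ((fun s => Cl.filter (fun c => Sg c s ≠ 0)) '' S1).Finite := by
    refine Set.Finite.subset Cl.powerset.finite_toSet ?_
    rintro _ ⟨s, _, rfl⟩
    exact Finset.mem_coe.2 (Finset.mem_powerset.2 (Finset.filter_subset _ _))
  obtain ⟨J, hJ⟩ := pigeon hS1i _ hpat
  set S2 := {s ∈ S1 | Cl.filter (fun c => Sg c s ≠ 0) = J} with hS2
  have hS2s : S2 ⊆ S := (Set.sep_subset _ _).trans hS1s
  have hU2 := hU.mono hS2s
  have hout : ∀ c : ℂ ⧸ WD D U0, π (Quotient.out c) = c := fun c => Quotient.out_eq c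
  let lam : (ℂ ⧸ WD D U0) → ℂ → ℂ := fun c s =>
    ∑ μ ∈ F.support with π μ = c, F μ * Complex.exp ((μ - Quotient.out c) * s)
  let γ : (ℂ ⧸ WD D U0) → ℂ → ℂ := fun c s => Complex.exp (Quotient.out c * s)
  have hlg : ∀ c s, lam c s * γ c s = Sg c s := by
    intro c s
    simp only [lam, γ, Sg, Finset.sum_mul]
    refine Finset.sum_congr rfl (fun μ _ => ?_)
    rw [mul_assoc, ← Complex.exp_add]; congr 2; ring
  have hJne : J.Nonempty := by
    obtain ⟨s, hs, hsJ⟩ := hJ.nonempty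
    have hns := hs.2
    unfold Split at hns
    push Not at hns
    obtain ⟨ν, hν⟩ := hns
    have e : Sg (π ν) s ≠ 0 := by
      convert hν using 3
      exact hπ _ _
    refine ⟨π ν, ?_⟩
    rw [← hsJ, Finset.mem_filter]
    refine ⟨?_, e⟩
    by_contra hc
    apply e
    apply Finset.sum_eq_zero
    intro μ hμ
    rw [Finset.mem_filter] at hμ
    exact absurd (Finset.mem_image.2 ⟨μ, hμ.1, hμ.2⟩) hc
  have hnz : ∀ c ∈ J, ∀ s ∈ S2, Sg c s ≠ 0 := by
    rintro c hc s ⟨_, hs⟩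
    rw [← hs, Finset.mem_filter] at hc
    exact hc.2
  have q1 : ∀ j ∈ J, Bdd D S2 (lam j) := by
    intro j _
    refine Bdd.sum _ _ ?_
    intro μ hμ
    rw [Finset.mem_filter] at hμ
    refine (Bdd.const D S2 (F μ)).mul (expw_bdd D _ S2 hJ U0 hU2 ?_)
    rw [← hπ, hout, hμ.2]
  have q2 : ∀ j ∈ J, ∀ s ∈ S2, lam j s ≠ 0 := by
    intro j hj s hs h0
    apply hnz j hj s hs
    rw [← hlg, h0, zero_mul]
  have q3 : ∀ s ∈ S2, ∑ j ∈ J, lam j s * γ j s = 0 := by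
    rintro s hs
    have h1 := hF s (hS2s hs)
    rw [← Finset.sum_fiberwise_of_maps_to (t := Cl) (g := π)
      (fun μ hμ => Finset.mem_image_of_mem _ hμ)] at h1
    simp only [hlg]
    rw [← hs.2, Finset.sum_filter_ne_zero]
    exact h1
  obtain ⟨i, _, j, _, hij, S', hS', hS'i, A, B, hA, hB, hAB⟩ :=
    G_lemma D J.card J rfl lam γ S2 hJ hJne q1 q2 (fun _ _ _ _ => Complex.exp_ne_zero _)
      (fun j _ => dlog_bdd D _ S2 hJ U0 hfg hU2) q3
  have := val_step D S' hS'i U0 (hU2.mono hS') (Quotient.out i - Quotient.out j) A B hA hB ?_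
  · apply hij
    rw [← hout i, ← hout j, hπ]
    exact this
  · intro s hs
    obtain ⟨h1, h2, h3⟩ := hAB s hs
    refine ⟨h1, h2, ?_⟩
    convert h3 using 2
    simp only [γ]
    rw [sub_mul, Complex.exp_sub]
    have := Complex.exp_ne_zero (Quotient.out j * s)
    field_simp

def W2 (U0 : Submodule ℚ ℂ) : AddSubgroup ℂ where
  carrier := {w | ∀ u ∈ U0, IsAlgebraic ℚ (Complex.exp (w * u))}
  zero_mem' := by intro u _; simpa using isAlgebraic_one
  add_mem' := by
    intro a b ha hb u hu
    rw [add_mul, Complex.exp_add]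
    exact (ha u hu).mul (hb u hu)
  neg_mem' := by
    intro a ha u hu
    rw [neg_mul, Complex.exp_neg]
    exact (ha u hu).inv

lemma step3 (S : Set ℂ) (U0 : Submodule ℚ ℂ)
    (hfg : U0.FG) (hU : HU S U0) (F : ℂ →₀ ℂ)
    (hF : ∀ s ∈ S, ∑ μ ∈ F.support, F μ * Complex.exp (μ * s) = 0) :
    {s ∈ S | ¬ Split F (W2 U0) s}.Finite := by
  classical
  obtain ⟨t, ht⟩ := id hfg
  obtain ⟨D, hD⟩ := exists_der_fin (((F.support ×ˢ F.support) ×ˢ t).image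
    (fun p => Complex.exp ((p.1.1 - p.1.2) * p.2)))
  refine (step3D D S U0 hfg hU F hF).subset ?_
  rintro s ⟨hs, hns⟩
  refine ⟨hs, fun h => hns (h.mono ?_)⟩
  intro μ hμ μ' hμ'
  constructor
  · intro hw u hu
    have hw' : ∀ x ∈ t, IsAlgebraic ℚ (Complex.exp ((μ - μ') * x)) := by
      intro x hx
      apply hD
      · rw [Finset.mem_image]
        exact ⟨((μ, μ'), x), by
          simp only [Finset.mem_product]; exact ⟨⟨hμ, hμ'⟩, hx⟩, rfl⟩
      · apply hw
        rw [← ht]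
        exact Submodule.subset_span hx
    rw [← ht] at hu
    induction hu using Submodule.span_induction with
    | mem x hx => exact hw' x hx
    | zero => simpa using isAlgebraic_one
    | add x y _ _ hx hy => rw [mul_add, Complex.exp_add]; exact hx.mul hy
    | smul q x _ hx =>
      have e : (μ - μ') * (q • x) = q * ((μ - μ') * x) := by rw [Rat.smul_def]; ring
      rw [e]
      exact exp_rat_alg hx q
  · intro hw u hu
    apply const_of_integral
    exact (hw u hu).isIntegral.tower_top


lemma iep_finset {ι : Type*} (J : Finset ι) (lam mu : ι → ℂ) :
    IsExpPoly (fun z => ∑ i ∈ J, lam i * Complex.exp (mu i * z)) := by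
  let e := J.equivFin
  refine ⟨J.card, fun i => lam (e.symm i), fun i => mu (e.symm i), fun z => ?_⟩
  show ∑ i ∈ J, lam i * Complex.exp (mu i * z) = _
  rw [← Finset.sum_coe_sort]
  exact (Equiv.sum_comp e.symm (fun i : J => lam i * Complex.exp (mu i * z))).symm

lemma iep_exp (c w : ℂ) : IsExpPoly (fun z => c * Complex.exp (w * z)) := by
  simpa using iep_finset ({()} : Finset Unit) (fun _ => c) (fun _ => w)

lemma iep_add {f g : ℂ → ℂ} (hf : IsExpPoly f) (hg : IsExpPoly g) : IsExpPoly (f + g) := by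
  obtain ⟨N, l, m, h⟩ := hf
  obtain ⟨N', l', m', h'⟩ := hg
  have := iep_finset (Finset.univ : Finset (Fin N ⊕ Fin N')) (Sum.elim l l') (Sum.elim m m')
  convert this using 2 with z
  simp [h, h']

lemma iep_mul {f g : ℂ → ℂ} (hf : IsExpPoly f) (hg : IsExpPoly g) : IsExpPoly (f * g) := by
  obtain ⟨N, l, m, h⟩ := hf
  obtain ⟨N', l', m', h'⟩ := hg
  have := iep_finset (Finset.univ : Finset (Fin N × Fin N')) (fun p => l p.1 * l' p.2)
    (fun p => m p.1 + m' p.2)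
  convert this using 2 with z
  rw [Pi.mul_apply, h, h', Finset.sum_mul_sum, ← Finset.univ_product_univ, Finset.sum_product]
  refine Finset.sum_congr rfl (fun i _ => Finset.sum_congr rfl (fun j _ => ?_))
  simp only
  rw [add_mul, Complex.exp_add]; ring

lemma iep_const (c : ℂ) : IsExpPoly (fun _ => c) := by
  simpa using iep_exp c 0

lemma iep_sum {ι : Type*} (J : Finset ι) (k : ι → ℂ → ℂ) (h : ∀ i ∈ J, IsExpPoly (k i)) :
    IsExpPoly (fun z => ∑ i ∈ J, k i z) := by
  classical
  induction J using Finset.induction_on with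
  | empty => simpa using iep_const 0
  | insert a J ha ih =>
    have := iep_add (h a (by simp)) (ih (fun i hi => h i (by simp [hi])))
    convert this using 2 with z
    rw [Finset.sum_insert ha]; rfl

lemma EUnit.ne {h : ℂ → ℂ} (hu : EUnit h) (s : ℂ) : h s ≠ 0 := by
  obtain ⟨_, g, _, hg⟩ := hu
  intro h0
  have := congrFun hg s
  simp [h0] at this

lemma CF {f g : ℂ → ℂ} (hf : EIrreducible f) (hg : EIrreducible g)
    (hne : ¬ ∃ u : ℂ → ℂ, EUnit u ∧ f = u * g) {h k k' : ℂ → ℂ} (hh : IsExpPoly h)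
    (hk : IsExpPoly k) (hk' : IsExpPoly k') (h1 : f = h * k) (h2 : g = h * k') {s : ℂ}
    (hs : h s = 0) : False := by
  have hu : ¬ EUnit h := fun hu => hu.ne s hs
  obtain ⟨_, k1, hk1, e1⟩ := (hf.2.2.2 h k hh hk h1).resolve_left hu
  obtain ⟨_, k2, hk2, e2⟩ := (hg.2.2.2 h k' hh hk' h2).resolve_left hu
  apply hne
  refine ⟨k * k2, ⟨iep_mul hk hk2, k1 * k', iep_mul hk1 hk', ?_⟩, ?_⟩
  · calc k * k2 * (k1 * k') = (k * k1) * (k' * k2) := by ring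
      _ = 1 := by rw [e1, e2, one_mul]
  · rw [h1, h2]
    calc h * k = h * k * 1 := by ring
      _ = h * k * (k' * k2) := by rw [e2]
      _ = k * k2 * (h * k') := by ring

lemma pow_dvd (w s : ℂ) (n : ℤ) : ∃ k, IsExpPoly k ∧ ∀ z, Complex.exp (n * w * z) -
    Complex.exp (n * w * s) = (Complex.exp (w * z) - Complex.exp (w * s)) * k z := by
  induction n using Int.induction_on with
  | zero => exact ⟨_, iep_const 0, fun z => by simp⟩
  | succ n ih =>
    obtain ⟨k, hk, h⟩ := ih
    refine ⟨_, iep_add (iep_mul (iep_exp 1 w) hk) (iep_const (Complex.exp ((n : ℤ) * w * s))), ?_⟩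
    intro z
    have := h z
    simp only [Pi.add_apply, Pi.mul_apply]
    push_cast at *
    rw [add_mul, add_mul, add_mul, Complex.exp_add, Complex.exp_add, one_mul]
    linear_combination Complex.exp (w * z) * this
  | pred n ih =>
    obtain ⟨k, hk, h⟩ := ih
    refine ⟨_, iep_add (iep_mul (iep_exp 1 (-w)) hk)
      (iep_exp (-Complex.exp ((-(n : ℤ)-1) * w * s)) (-w)), ?_⟩
    intro z
    have := h z
    simp only [Pi.add_apply, Pi.mul_apply]
    push_cast at *
    have ez := Complex.exp_ne_zero (w * z)
    have es := Complex.exp_ne_zero (w * s)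
    rw [sub_mul, sub_mul, sub_mul, Complex.exp_sub, Complex.exp_sub, one_mul, neg_mul w,
      Complex.exp_neg]
    clear h
    generalize Complex.exp (-(n : ℂ) * w * z) = X at *
    generalize Complex.exp (-(n : ℂ) * w * s) = Y at *
    field_simp
    linear_combination Complex.exp (w * s) * this

noncomputable def evF (F : ℂ →₀ ℂ) (z : ℂ) : ℂ := ∑ μ ∈ F.support, F μ * Complex.exp (μ * z)

lemma split_dvd {F : ℂ →₀ ℂ} {G : AddSubgroup ℂ} {s w : ℂ} (h : Split F G s)
    (hG : G ≤ AddSubgroup.zmultiples w) :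
    ∃ k, IsExpPoly k ∧ ∀ z, evF F z = (Complex.exp (w * z) - Complex.exp (w * s)) * k z := by
  classical
  let π : ℂ → ℂ ⧸ G := fun x => QuotientAddGroup.mk x
  have hπ : ∀ a b, π a = π b ↔ a - b ∈ G := by
    intro a b
    rw [← neg_sub, neg_mem_iff, sub_eq_neg_add]
    exact QuotientAddGroup.eq
  have hout : ∀ c : ℂ ⧸ G, π (Quotient.out c) = c := fun c => Quotient.out_eq c
  let ρ : ℂ → ℂ := fun μ => Quotient.out (π μ)
  have hk : ∀ μ : ℂ, ∃ k, IsExpPoly k ∧ ∀ z, Complex.exp (μ * z) -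
      Complex.exp ((μ - ρ μ) * s) * Complex.exp (ρ μ * z) =
      (Complex.exp (w * z) - Complex.exp (w * s)) * k z := by
    intro μ
    have h1 : μ - ρ μ ∈ G := by rw [← hπ, hout]
    obtain ⟨n, hn⟩ := AddSubgroup.mem_zmultiples_iff.1 (hG h1)
    obtain ⟨k, hk, h2⟩ := pow_dvd w s n
    refine ⟨_, iep_mul (iep_exp 1 (ρ μ)) hk, ?_⟩
    intro z
    have e : μ - ρ μ = n * w := by rw [← hn]; simp
    have e' : Complex.exp (μ * z) = Complex.exp (n * w * z) * Complex.exp (ρ μ * z) := by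
      rw [← Complex.exp_add, ← e]; congr 1; ring
    rw [e, e', Pi.mul_apply]
    linear_combination Complex.exp (ρ μ * z) * h2 z
  choose k hk1 hk2 using hk
  refine ⟨_, iep_sum F.support (fun μ => (fun _ => F μ) * k μ)
    (fun μ _ => iep_mul (iep_const _) (hk1 μ)), ?_⟩
  intro z
  have h0 : ∑ μ ∈ F.support, F μ * (Complex.exp ((μ - ρ μ) * s) * Complex.exp (ρ μ * z)) = 0 := by
    rw [← Finset.sum_fiberwise_of_maps_to (t := F.support.image π) (g := π)
      (fun μ hμ => Finset.mem_image_of_mem _ hμ)]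
    apply Finset.sum_eq_zero
    intro c _
    have h1 := h (Quotient.out c)
    have h2 : ∑ μ ∈ F.support with π μ = c,
        F μ * (Complex.exp ((μ - ρ μ) * s) * Complex.exp (ρ μ * z)) =
        (∑ μ ∈ F.support with μ - Quotient.out c ∈ G, F μ * Complex.exp (μ * s)) *
          (Complex.exp (-(Quotient.out c) * s) * Complex.exp (Quotient.out c * z)) := by
      rw [Finset.sum_mul]
      have hfil : (F.support.filter (fun μ => π μ = c)) =
          F.support.filter (fun μ => μ - Quotient.out c ∈ G) := by
        refine Finset.filter_congr (fun μ _ => ?_)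
        rw [← hπ, hout]
      rw [← hfil]
      refine Finset.sum_congr rfl (fun μ hμ => ?_)
      have hc := (Finset.mem_filter.1 hμ).2
      simp only [ρ, hc]
      rw [sub_mul, sub_eq_add_neg, Complex.exp_add, neg_mul]
      ring
    rw [h2, h1, zero_mul]
  simp only [Pi.mul_apply]
  rw [Finset.mul_sum, evF, ← sub_zero (∑ μ ∈ F.support, _), ← h0, ← Finset.sum_sub_distrib]
  refine Finset.sum_congr rfl (fun μ _ => ?_)
  linear_combination F μ * hk2 μ z

lemma common_den (T : Finset ℚ) : ∃ m : ℕ, m ≠ 0 ∧ ∀ q ∈ T, ∃ n : ℤ, q = n / m := by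
  refine ⟨∏ q ∈ T, q.den, Finset.prod_ne_zero_iff.2 (fun q _ => q.den_ne_zero), ?_⟩
  intro q hq
  obtain ⟨c, hc⟩ := Finset.dvd_prod_of_mem (fun q : ℚ => q.den) hq
  have hp : (∏ q ∈ T, q.den : ℕ) ≠ 0 := Finset.prod_ne_zero_iff.2 (fun q _ => q.den_ne_zero)
  refine ⟨q.num * c, ?_⟩
  rw [hc] at *
  have h1 : (q.den : ℚ) ≠ 0 := by exact_mod_cast q.den_ne_zero
  have h2 : (c : ℚ) ≠ 0 := by
    intro h; apply hp; have : c = 0 := by exact_mod_cast h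
    simp [this]
  push_cast
  rw [eq_div_iff (by positivity), ← mul_assoc]
  rw [Rat.mul_den_eq_num]

lemma CF2 {f g : ℂ → ℂ} (hf : EIrreducible f) (hg : EIrreducible g)
    (hne : ¬ ∃ u : ℂ → ℂ, EUnit u ∧ f = u * g) {Ff Fg : ℂ →₀ ℂ}
    (ef : ∀ z, f z = evF Ff z) (eg : ∀ z, g z = evF Fg z) {G : AddSubgroup ℂ} {w0 s : ℂ}
    (hG : ∀ x ∈ G, ∃ q : ℚ, x = q * w0) (h1 : Split Ff G s) (h2 : Split Fg G s) : False := by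
  classical
  have hq : ∀ x : ℂ, ∃ q : ℚ, x ∈ G → x = q * w0 := by
    intro x
    by_cases hx : x ∈ G
    · obtain ⟨q, hq⟩ := hG x hx
      exact ⟨q, fun _ => hq⟩
    · exact ⟨0, fun h => absurd h hx⟩
  choose q hq using hq
  let T := Ff.support ∪ Fg.support
  obtain ⟨m, hm0, hm⟩ := common_den ((T ×ˢ T).image (fun p => q (p.1 - p.2)))
  have hm0' : (m : ℂ) ≠ 0 := by exact_mod_cast hm0
  set w := w0 / m with hw
  have hT : ∀ μ ∈ T, ∀ μ' ∈ T, (μ - μ' ∈ G ↔ μ - μ' ∈ G ⊓ AddSubgroup.zmultiples w) := by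
    intro μ hμ μ' hμ'
    rw [AddSubgroup.mem_inf]
    refine ⟨fun h => ⟨h, ?_⟩, fun h => h.1⟩
    obtain ⟨n, hn⟩ := hm (q (μ - μ'))
      (Finset.mem_image.2 ⟨(μ, μ'), Finset.mem_product.2 ⟨hμ, hμ'⟩, rfl⟩)
    rw [AddSubgroup.mem_zmultiples_iff]
    refine ⟨n, ?_⟩
    rw [hq _ h, hn, hw]
    push_cast
    rw [zsmul_eq_mul]
    field_simp
  have s1 := h1.mono (fun μ hμ μ' hμ' => hT μ (Finset.mem_union_left _ hμ) μ' (Finset.mem_union_left _ hμ'))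
  have s2 := h2.mono (fun μ hμ μ' hμ' => hT μ (Finset.mem_union_right _ hμ) μ' (Finset.mem_union_right _ hμ'))
  obtain ⟨k, hk, e⟩ := split_dvd s1 inf_le_right
  obtain ⟨k', hk', e'⟩ := split_dvd s2 inf_le_right
  refine CF hf hg hne (h := (fun z => 1 * Complex.exp (w * z)) + (fun _ => -Complex.exp (w * s)))
    (iep_add (iep_exp 1 w) (iep_const _)) hk hk' ?_ ?_ (s := s) ?_
  · funext z; rw [ef, e]; simp [sub_eq_add_neg]
  · funext z; rw [eg, e']; simp [sub_eq_add_neg]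
  · simp

lemma exists_F {f : ℂ → ℂ} (hf : IsExpPoly f) : ∃ F : ℂ →₀ ℂ, ∀ z, f z = evF F z := by
  classical
  obtain ⟨N, l, m, h⟩ := hf
  refine ⟨∑ i, Finsupp.single (m i) (l i), fun z => ?_⟩
  have : ∀ F : ℂ →₀ ℂ, evF F z = F.sum (fun μ c => c * Complex.exp (μ * z)) := fun F => rfl
  rw [this, h, ← Finsupp.sum_finsetSum_index]
  · refine Finset.sum_congr rfl (fun i _ => ?_)
    rw [Finsupp.sum_single_index]; simp
  · simp
  · intro a b c; ring


lemma sc_exists (hSC : SchanuelConjecture) (n : ℕ) (lam : Fin n → ℂ)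
    (hl : LinearIndependent ℚ lam) : ∃ t : Finset ℂ,
      (t : Set ℂ) ⊆ Set.range lam ∪ Set.range (fun i => Complex.exp (lam i)) ∧
      AlgebraicIndependent ℚ (Subtype.val : {x : ℂ // x ∈ t} → ℂ) ∧ n ≤ t.card := by
  by_contra hc
  push Not at hc
  have h := hSC n lam hl
  rcases Nat.eq_zero_or_pos n with hn | hn
  · subst hn
    have := hc ∅ (by simp) (by
      rw [algebraicIndependent_empty_type_iff]
      exact (algebraMap ℚ ℂ).injective)
    simp at this
  · have h2 : trdegQ (Set.range lam ∪ Set.range (fun i => Complex.exp (lam i))) ≤ ((n - 1 : ℕ) : Cardinal) := by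
      unfold trdegQ
      apply ciSup_le'
      rintro ⟨t, ht, hti⟩
      have := hc t ht hti
      exact_mod_cast (by omega : t.card ≤ n - 1)
    have h3 : (n : Cardinal) ≤ ((n - 1 : ℕ) : Cardinal) := h.trans h2
    have h4 : n ≤ n - 1 := by exact_mod_cast h3
    omega

lemma sc_logs (hSC : SchanuelConjecture) (n : ℕ) (y : Fin n → ℂ)
    (hl : LinearIndependent ℚ y) (ha : ∀ i, IsAlgebraic ℚ (Complex.exp (y i))) :
    AlgebraicIndependent ℚ y := by
  classical
  obtain ⟨t, ht, hti, hn⟩ := sc_exists hSC n y hl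
  have hsub : t ⊆ Finset.univ.image y := by
    intro x hx
    rcases ht hx with ⟨i, rfl⟩ | ⟨i, rfl⟩
    · simp
    · exact absurd (ha i) (hti.transcendental ⟨_, hx⟩)
  have hcard : (Finset.univ.image y).card ≤ n := by
    simpa using Finset.card_image_le (s := Finset.univ) (f := y)
  have heq : t = Finset.univ.image y := Finset.eq_of_subset_of_card_le hsub (hcard.trans hn)
  have hr : (Set.range y) = (t : Set ℂ) := by rw [heq]; simp
  rw [← algebraicIndependent_subtype_range hl.injective, hr]
  exact hti

lemma lin_poly {ι : Type*} (y : ι → ℂ) (x : ℂ) (hx : x ∈ Submodule.span ℚ (Set.range y)) :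
    ∃ P : MvPolynomial ι ℚ, MvPolynomial.aeval y P = x ∧
      ∀ θ : ℂ →ₗ[ℚ] ℚ, MvPolynomial.eval (fun i => θ (y i)) P = θ x := by
  induction hx using Submodule.span_induction with
  | mem x hx =>
    obtain ⟨i, rfl⟩ := hx
    exact ⟨MvPolynomial.X i, by simp, by simp⟩
  | zero => exact ⟨0, by simp, by simp⟩
  | add a b _ _ ha hb =>
    obtain ⟨P, h1, h2⟩ := ha
    obtain ⟨Q, h3, h4⟩ := hb
    exact ⟨P + Q, by simp [h1, h3], fun θ => by simp [h2, h4]⟩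
  | smul q a _ ha =>
    obtain ⟨P, h1, h2⟩ := ha
    exact ⟨q • P, by simp [h1], fun θ => by simp [h2, MvPolynomial.smul_eq_C_mul]⟩

lemma four_exp_theta (hSC : SchanuelConjecture) (x : Fin 4 → ℂ)
    (ha : ∀ i, IsAlgebraic ℚ (Complex.exp (x i))) (hx : x 0 * x 3 = x 1 * x 2)
    (θ : ℂ →ₗ[ℚ] ℚ) : θ (x 0) * θ (x 3) = θ (x 1) * θ (x 2) := by
  obtain ⟨b, hb, hspan, hli⟩ := exists_linearIndependent ℚ (Set.range x)
  have hfin : b.Finite := (Set.finite_range x).subset hb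
  have : Fintype b := hfin.fintype
  let e := Fintype.equivFin b
  let y : Fin (Fintype.card b) → ℂ := fun i => (e.symm i : ℂ)
  have hy : LinearIndependent ℚ y := hli.comp e.symm e.symm.injective
  have hry : Set.range y = b := by
    ext z; constructor
    · rintro ⟨i, rfl⟩; exact (e.symm i).2
    · intro hz; exact ⟨e ⟨z, hz⟩, by simp [y]⟩
  have hya : AlgebraicIndependent ℚ y := by
    refine sc_logs hSC _ y hy (fun i => ?_)
    obtain ⟨j, hj⟩ := hb (e.symm i).2
    show IsAlgebraic ℚ (Complex.exp (e.symm i : ℂ))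
    rw [← hj]; exact ha j
  have hP : ∀ i, ∃ P : MvPolynomial (Fin (Fintype.card b)) ℚ, MvPolynomial.aeval y P = x i ∧
      ∀ θ : ℂ →ₗ[ℚ] ℚ, MvPolynomial.eval (fun i => θ (y i)) P = θ (x i) := by
    intro i
    apply lin_poly
    rw [hry, hspan]
    exact Submodule.subset_span ⟨i, rfl⟩
  choose P h1 h2 using hP
  have hpe : P 0 * P 3 = P 1 * P 2 := by
    apply hya
    rw [map_mul, map_mul, h1, h1, h1, h1, hx]
  have := congrArg (MvPolynomial.eval (fun i => θ (y i))) hpe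
  simpa [h2] using this

lemma theta_exists (a b : ℂ) (h : ∀ q : ℚ, b ≠ q * a) : ∃ θ : ℂ →ₗ[ℚ] ℚ, θ a = 0 ∧ θ b ≠ 0 := by
  have hb : b ∉ Submodule.span ℚ {a} := by
    intro hb
    obtain ⟨q, hq⟩ := Submodule.mem_span_singleton.1 hb
    exact h q (by rw [← hq, Rat.smul_def])
  obtain ⟨θ, h1, h2⟩ := Submodule.exists_le_ker_of_notMem hb
  exact ⟨θ, h2 (Submodule.mem_span_singleton_self a), h1⟩

lemma four_exp (hSC : SchanuelConjecture) (w1 w2 u1 u2 : ℂ) (hw1 : w1 ≠ 0) (hu1 : u1 ≠ 0)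
    (hw : ∀ q : ℚ, w2 ≠ q * w1) (hu : ∀ q : ℚ, u2 ≠ q * u1)
    (h11 : IsAlgebraic ℚ (Complex.exp (w1 * u1))) (h12 : IsAlgebraic ℚ (Complex.exp (w1 * u2)))
    (h21 : IsAlgebraic ℚ (Complex.exp (w2 * u1))) (h22 : IsAlgebraic ℚ (Complex.exp (w2 * u2))) :
    False := by
  have key : ∀ θ : ℂ →ₗ[ℚ] ℚ, θ (w1 * u1) * θ (w2 * u2) = θ (w1 * u2) * θ (w2 * u1) := by
    intro θ
    have := four_exp_theta hSC ![w1 * u1, w1 * u2, w2 * u1, w2 * u2] (by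
      intro i; fin_cases i
      · exact h11
      · exact h12
      · exact h21
      · exact h22) (by simp; ring) θ
    simpa using this
  obtain ⟨θ, t1, t2⟩ := theta_exists (w1 * u1) (w1 * u2) (by
    intro q h
    apply hu q
    apply mul_left_cancel₀ hw1
    rw [h]; ring)
  obtain ⟨φ, p1, p2⟩ := theta_exists (w1 * u1) (w2 * u1) (by
    intro q h
    apply hw q
    apply mul_right_cancel₀ hu1
    rw [h]; ring)
  have k1 := key θ
  have k2 := key φ
  have k3 := key (θ + φ)
  rw [t1, zero_mul] at k1
  rw [p1, zero_mul] at k2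
  simp only [LinearMap.add_apply, t1, p1, add_zero, zero_mul] at k3
  have k1' := (mul_eq_zero.1 k1.symm).resolve_left t2
  have k2' := (mul_eq_zero.1 k2.symm).resolve_right p2
  rw [k1', k2'] at k3
  simp [t2, p2] at k3

def HH (u : ℂ) : AddSubgroup ℂ where
  carrier := {w | ∃ r : ℚ, w * u = 2 * Real.pi * Complex.I * r}
  zero_mem' := ⟨0, by simp⟩
  add_mem' := by
    rintro a b ⟨r, hr⟩ ⟨r', hr'⟩
    exact ⟨r + r', by push_cast; rw [add_mul, hr, hr']; ring⟩
  neg_mem' := by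
    rintro a ⟨r, hr⟩
    exact ⟨-r, by push_cast; rw [neg_mul, hr]; ring⟩

lemma split_iff_supp {F : ℂ →₀ ℂ} {G : AddSubgroup ℂ} {s : ℂ} (h : ¬ Split F G s) :
    ∃ ν ∈ F.support, (open Classical in ∑ μ ∈ F.support with μ - ν ∈ G, F μ * Complex.exp (μ * s)) ≠ 0 := by
  classical
  unfold Split at h
  push Not at h
  obtain ⟨ν, hν⟩ := h
  obtain ⟨μ0, hμ0, _⟩ := Finset.exists_ne_zero_of_sum_ne_zero hν
  rw [Finset.mem_filter] at hμ0
  refine ⟨μ0, hμ0.1, ?_⟩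
  intro h0
  apply hν
  rw [← h0]
  congr 1
  refine Finset.filter_congr (fun μ _ => ?_)
  have e : μ - ν = (μ - μ0) + (μ0 - ν) := by ring
  rw [e]
  exact ⟨fun h => by simpa using G.sub_mem h hμ0.2, fun h => G.add_mem h hμ0.2⟩

lemma step5 (S : Set ℂ) (U0 : Submodule ℚ ℂ) (u s0 : ℂ) (hu : u ∈ U0)
    (hSu : ∀ s ∈ S, ∃ q : ℚ, s = s0 + q * u) (F : ℂ →₀ ℂ) (hsp : ∀ s ∈ S, Split F (W2 U0) s) :
    {s ∈ S | ¬ Split F (W2 U0 ⊓ HH u) s}.Finite := by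
  classical
  have hfin : (⋃ ν ∈ F.support, (fun q : ℚ => s0 + q * u) ''
      {q : ℚ | ∑ j ∈ F.support.filter (fun μ => μ - ν ∈ W2 U0),
        (F j * Complex.exp ((j - ν) * s0)) * Complex.exp (q * ((j - ν) * u)) = 0 ∧
        ∑ j ∈ F.support.filter (fun μ => μ - ν ∈ W2 U0) with
          SameCls ((j - ν) * u) ((ν - ν) * u),
          (F j * Complex.exp ((j - ν) * s0)) * Complex.exp (q * ((j - ν) * u)) ≠ 0}).Finite := by
    refine Set.Finite.biUnion F.support.finite_toSet (fun ν hν => Set.Finite.image _ ?_)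
    have := thmQ (F.support.filter (fun μ => μ - ν ∈ W2 U0))
      (fun j => F j * Complex.exp ((j - ν) * s0)) (fun j => (j - ν) * u) ?_ ν ?_
    · exact this
    · intro j hj
      exact (Finset.mem_filter.1 hj).2 u hu
    · rw [Finset.mem_filter]
      exact ⟨hν, by rw [sub_self]; exact (W2 U0).zero_mem⟩
  refine hfin.subset ?_
  rintro s ⟨hs, hns⟩
  obtain ⟨ν, hν, hne⟩ := split_iff_supp hns
  obtain ⟨q, hq⟩ := hSu s hs
  simp only [Set.mem_iUnion]
  refine ⟨ν, hν, q, ⟨?_, ?_⟩, hq.symm⟩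
  · have h1 := hsp s hs ν
    have h2 := congrArg (fun x => x * Complex.exp (-ν * s)) h1
    simp only [zero_mul, Finset.sum_mul] at h2
    rw [← h2]
    refine Finset.sum_congr rfl (fun j _ => ?_)
    rw [mul_assoc, mul_assoc, ← Complex.exp_add, ← Complex.exp_add, hq]
    congr 2; ring
  · intro h1
    apply hne
    have h2 := congrArg (fun x => x * Complex.exp (ν * s)) h1
    simp only [zero_mul, Finset.sum_mul] at h2
    rw [← h2, Finset.filter_filter]
    refine Finset.sum_congr ?_ (fun j _ => ?_)
    · refine Finset.filter_congr (fun μ _ => ?_)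
      rw [AddSubgroup.mem_inf]
      unfold SameCls
      rw [sub_self, zero_mul, sub_zero]
      rfl
    · rw [mul_assoc, mul_assoc, ← Complex.exp_add, ← Complex.exp_add, hq]
      congr 2; ring

lemma final_U {f g : ℂ → ℂ} (hSC : SchanuelConjecture) (hf : EIrreducible f) (hg : EIrreducible g)
    (hne : ¬ ∃ u : ℂ → ℂ, EUnit u ∧ f = u * g) {Ff Fg : ℂ →₀ ℂ}
    (ef : ∀ z, f z = evF Ff z) (eg : ∀ z, g z = evF Fg z) (S : Set ℂ) (hS : S.Infinite)
    (h0 : ∀ s ∈ S, f s = 0 ∧ g s = 0) (U0 : Submodule ℚ ℂ) (hfg : U0.FG) (hU : HU S U0) :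
    False := by
  have f1 := step3 S U0 hfg hU Ff (fun s hs => by rw [← (h0 s hs).1, ef]; rfl)
  have f2 := step3 S U0 hfg hU Fg (fun s hs => by rw [← (h0 s hs).2, eg]; rfl)
  set S1 := S \ ({s ∈ S | ¬ Split Ff (W2 U0) s} ∪ {s ∈ S | ¬ Split Fg (W2 U0) s}) with hS1
  have hS1i : S1.Infinite := hS.sdiff (f1.union f2)
  have hS1s : S1 ⊆ S := Set.sdiff_subset
  have sf : ∀ s ∈ S1, Split Ff (W2 U0) s := by
    intro s hs
    by_contra h
    exact hs.2 (Or.inl ⟨hs.1, h⟩)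
  have sg : ∀ s ∈ S1, Split Fg (W2 U0) s := by
    intro s hs
    by_contra h
    exact hs.2 (Or.inr ⟨hs.1, h⟩)
  by_cases hW : ∃ w0, ∀ x ∈ W2 U0, ∃ q : ℚ, x = q * w0
  · obtain ⟨w0, hW⟩ := hW
    obtain ⟨s, hs⟩ := hS1i.nonempty
    exact CF2 hf hg hne ef eg hW (sf s hs) (sg s hs)
  push Not at hW
  obtain ⟨w1, hw1, hw1'⟩ := hW 0
  have hw1n : w1 ≠ 0 := fun h => hw1' 0 (by simp [h])
  obtain ⟨w2, hw2, hw2'⟩ := hW w1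
  obtain ⟨s0, hs0⟩ := hS1i.nonempty
  obtain ⟨s1, hs1, hs10⟩ := (hS1i.sdiff (Set.finite_singleton s0)).nonempty
  set u := s1 - s0 with hu
  have hun : u ≠ 0 := sub_ne_zero.2 hs10
  have huU : u ∈ U0 := sub_mem_U0 hS hU (hS1s hs1) (hS1s hs0)
  have hSu : ∀ s ∈ S1, ∃ q : ℚ, s = s0 + q * u := by
    intro s hs
    by_contra hc
    push Not at hc
    have hU2 : s - s0 ∈ U0 := sub_mem_U0 hS hU (hS1s hs) (hS1s hs0)
    refine four_exp hSC w1 w2 u (s - s0) hw1n hun hw2' ?_ (hw1 _ huU) (hw1 _ hU2) (hw2 _ huU)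
      (hw2 _ hU2)
    intro q hq
    exact hc q (by rw [← hq]; ring)
  have g1 := step5 S1 U0 u s0 huU hSu Ff sf
  have g2 := step5 S1 U0 u s0 huU hSu Fg sg
  obtain ⟨s, hs⟩ := (hS1i.sdiff (g1.union g2)).nonempty
  refine CF2 hf hg hne ef eg (G := W2 U0 ⊓ HH u) (w0 := 2 * Real.pi * Complex.I / u) (s := s) ?_ ?_ ?_
  · rintro x ⟨_, r, hr⟩
    refine ⟨r, ?_⟩
    rw [eq_comm, mul_div_assoc', div_eq_iff hun, hr]; ring
  · by_contra h
    exact hs.2 (Or.inl ⟨hs.1, h⟩)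
  · by_contra h
    exact hs.2 (Or.inr ⟨hs.1, h⟩)

lemma final_fd {f g : ℂ → ℂ} (hSC : SchanuelConjecture) (hf : EIrreducible f) (hg : EIrreducible g)
    (hne : ¬ ∃ u : ℂ → ℂ, EUnit u ∧ f = u * g) {Ff Fg : ℂ →₀ ℂ}
    (ef : ∀ z, f z = evF Ff z) (eg : ∀ z, g z = evF Fg z) (S : Set ℂ) (hS : S.Infinite)
    (h0 : ∀ s ∈ S, f s = 0 ∧ g s = 0) (U : Submodule ℚ ℂ) (hfg : U.FG)
    (hU : ∀ s ∈ S, s ∈ U) : False := by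
  classical
  have : Module.Finite ℚ U := Module.Finite.iff_fg.2 hfg
  let sp : Set ℂ → Submodule ℚ ℂ := fun T => Submodule.span ℚ {x | ∃ s ∈ T, ∃ s' ∈ T, x = s - s'}
  have hsp : ∀ T ⊆ S, sp T ≤ U := by
    intro T hT
    rw [Submodule.span_le]
    rintro x ⟨s, hs, s', hs', rfl⟩
    exact U.sub_mem (hU s (hT hs)) (hU s' (hT hs'))
  have hmono : ∀ T T' : Set ℂ, T ⊆ T' → sp T ≤ sp T' := by
    intro T T' hT
    apply Submodule.span_mono
    rintro x ⟨s, hs, s', hs', rfl⟩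
    exact ⟨s, hT hs, s', hT hs', rfl⟩
  have hex : ∃ n, ∃ T ⊆ S, T.Infinite ∧ Module.finrank ℚ (sp T) = n := ⟨_, S, subset_rfl, hS, rfl⟩
  obtain ⟨T, hT, hTi, hn⟩ := Nat.find_spec hex
  have hTfd : Module.Finite ℚ (sp T) := Submodule.finiteDimensional_of_le (hsp T hT)
  refine final_U hSC hf hg hne ef eg T hTi (fun s hs => h0 s (hT hs)) (sp T)
    (Module.Finite.iff_fg.1 hTfd) ?_
  intro T' hT' hTi'
  apply Submodule.eq_of_le_of_finrank_le (hmono _ _ hT')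
  rw [hn]
  exact Nat.find_min' hex ⟨T', hT'.trans hT, hTi', rfl⟩


noncomputable def MQ : Matroid ℂ := AlgebraicIndependent.matroid ℚ ℂ

noncomputable def clF (X : Set ℂ) : Subfield ℂ := (algebraicClosure (IntermediateField.adjoin ℚ X) ℂ).toSubfield

lemma clF_mem {X : Set ℂ} {x : ℂ} : x ∈ clF X ↔ x ∈ MQ.closure X := by
  rw [MQ, AlgebraicIndependent.matroid_closure_eq]
  change x ∈ algebraicClosure (IntermediateField.adjoin ℚ X) ℂ ↔ x ∈ Subalgebra.algebraicClosure (Algebra.adjoin ℚ X) ℂ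
  rw [mem_algebraicClosure_iff, Subalgebra.mem_algebraicClosure]
  exact IntermediateField.isAlgebraic_adjoin_iff

lemma clF_sub {X : Set ℂ} : X ⊆ clF X := by
  intro x hx
  exact clF_mem.2 (MQ.mem_closure_of_mem' hx trivial)

lemma clF_root {X : Set ℂ} {x : ℂ} {n : ℕ} (hn : n ≠ 0) (h : x ^ n ∈ clF X) : x ∈ clF X := by
  change x ∈ algebraicClosure (IntermediateField.adjoin ℚ X) ℂ
  change x ^ n ∈ algebraicClosure (IntermediateField.adjoin ℚ X) ℂ at h
  rw [mem_algebraicClosure_iff] at *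
  exact IsAlgebraic.of_pow (Nat.pos_of_ne_zero hn) h

lemma clF_mono {X Y : Set ℂ} (h : X ⊆ clF Y) : clF X ≤ clF Y := by
  intro x hx
  rw [clF_mem] at *
  have : X ⊆ MQ.closure Y := fun y hy => clF_mem.1 (h hy)
  exact MQ.closure_subset_closure_of_subset_closure this hx

lemma rk_le_clF {X Y : Set ℂ} (h : X ⊆ clF Y) : MQ.eRk X ≤ MQ.eRk Y := by
  rw [← MQ.eRk_closure_eq Y]
  exact MQ.eRk_mono (fun y hy => clF_mem.1 (h hy))

lemma clF_smul {X : Set ℂ} {x : ℂ} (q : ℚ) (hx : x ∈ clF X) : (q : ℂ) * x ∈ clF X :=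
  mul_mem (SubfieldClass.ratCast_mem _ q) hx

lemma clF_exp {X A : Set ℂ} (hA : ∀ a ∈ A, Complex.exp a ∈ clF X) {x : ℂ}
    (hx : x ∈ Submodule.span ℚ A) : Complex.exp x ∈ clF X := by
  induction hx using Submodule.span_induction with
  | mem x h => exact hA x h
  | zero => simp
  | add x y _ _ h1 h2 => rw [Complex.exp_add]; exact mul_mem h1 h2
  | smul q x _ h =>
    apply clF_root (n := q.den) q.den_nz
    rw [← Complex.exp_nat_mul]
    have : (q.den : ℂ) * (q • x) = q.num * x := by
      rw [Rat.smul_def, ← mul_assoc]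
      congr 1
      have := Rat.den_mul_eq_num q
      exact_mod_cast this
    rw [this, Complex.exp_int_mul]
    exact zpow_mem h _

/-- SC bound -/
lemma sc_rk (hSC : SchanuelConjecture) {X A : Set ℂ} (hfin : A.Finite) (h1 : A ⊆ clF X)
    (h2 : ∀ a ∈ A, Complex.exp a ∈ clF X) :
    (Module.finrank ℚ (Submodule.span ℚ A) : ℕ∞) ≤ MQ.eRk X := by
  obtain ⟨b, hb, hsp, hli⟩ := exists_linearIndependent ℚ A
  have hbf : b.Finite := hfin.subset hb
  have := hbf.fintype
  let e := Fintype.equivFin b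
  obtain ⟨t, ht, hind, hc⟩ := sc_exists hSC (Fintype.card b) (fun i => ((e.symm i : b) : ℂ))
    (hli.comp _ e.symm.injective)
  have hfr : Module.finrank ℚ (Submodule.span ℚ A) = Fintype.card b := by
    rw [← hsp]
    have := finrank_span_eq_card hli
    rwa [Subtype.range_coe] at this
  rw [hfr]
  have hts : (t : Set ℂ) ⊆ MQ.closure X := by
    intro y hy
    rw [← clF_mem]
    rcases ht hy with ⟨i, rfl⟩ | ⟨i, rfl⟩
    · exact h1 (hb (e.symm i).2)
    · exact h2 _ (hb (e.symm i).2)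
  have hI : MQ.Indep (t : Set ℂ) := AlgebraicIndependent.matroid_indep_iff.2 hind
  have := hI.encard_le_eRk_of_subset hts
  rw [MQ.eRk_closure_eq, Set.encard_coe_eq_coe_finsetCard] at this
  exact le_trans (by exact_mod_cast hc) this

lemma rk_ext {X Y : Set ℂ} (hX : X.Finite) (k : ℕ) (h : MQ.eRk X + k ≤ MQ.eRk (X ∪ Y)) :
    ∃ I ⊆ Y, (k : ℕ∞) ≤ I.encard ∧ AlgebraicIndependent (clF X) (Subtype.val : I → ℂ) := by
  obtain ⟨B, hB⟩ := MQ.exists_isBasis X (by intro x _; trivial)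
  obtain ⟨B', hB', hBB⟩ := hB.indep.subset_isBasis_of_subset (hB.subset.trans Set.subset_union_left : B ⊆ X ∪ Y)
    (by intro x _; trivial)
  have hcl : clF B = clF X := by
    ext x
    rw [clF_mem, clF_mem, hB.closure_eq_closure]
  have hsub : B' \ B ⊆ Y := by
    rintro y ⟨hy, hyB⟩
    rcases hB'.subset hy with h | h
    · exfalso
      apply hyB
      exact hB.mem_of_insert_indep h (hB'.indep.subset (Set.insert_subset hy hBB))
    · exact h
  refine ⟨B' \ B, hsub, ?_, ?_⟩
  · rw [← hB.encard_eq_eRk, ← hB'.encard_eq_eRk, ← Set.encard_sdiff_add_encard_of_subset hBB, add_comm] at h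
    have hf : B.encard ≠ ⊤ := (hX.subset hB.subset).encard_lt_top.ne
    exact (ENat.add_le_add_iff_right hf).1 h
  · rw [← hcl]
    have h1 : AlgebraicIndepOn ℚ id B' := AlgebraicIndependent.matroid_indep_iff.1 hB'.indep
    have h2 : AlgebraicIndependent ℚ (Subtype.val : B' → ℂ) := h1
    have h3 := h2.adjoin_of_disjoint (s := {x : B' | (x:ℂ) ∈ B}) (t := {x : B' | (x:ℂ) ∉ B})
      (Set.disjoint_left.2 fun x h1 h2 => h2 h1)
    have him : (Subtype.val : B' → ℂ) '' {x : B' | (x:ℂ) ∈ B} = B := by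
      ext y; constructor
      · rintro ⟨z, hz, rfl⟩; exact hz
      · intro hy; exact ⟨⟨y, hBB hy⟩, hy, rfl⟩
    rw [him, ← IntermediateField.algebraicIndependent_adjoin_iff] at h3
    have h4 := h3.algebraicClosure
    have h5 : AlgebraicIndependent (clF B) (fun i : {x : B' | (x:ℂ) ∉ B} => ((i : B') : ℂ)) := h4
    exact h5.comp (fun y : ↑(B' \ B) => ⟨⟨y.1, y.2.1⟩, y.2.2⟩) (fun a b h => Subtype.ext (by simpa using h))

open Polynomial in
lemma G1 {R : Type*} [CommRing R] [IsDomain R] [UniqueFactorizationMonoid R] {L : Type*} [Field L]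
    (φ : R[X] →+* L)
    (hφ : Function.Injective (φ.comp C)) {P Q : R[X]} (hP : φ P = 0) (hQ : φ Q = 0) (hP0 : P ≠ 0) :
    ∃ H, H ∣ P ∧ H ∣ Q ∧ φ H = 0 := by
  classical
  have hker : (RingHom.ker φ).IsPrime := RingHom.ker_isPrime φ
  obtain ⟨H, hHP, hH⟩ : ∃ H, Prime H ∧ H ∣ P ∧ φ H = 0 := by
    obtain ⟨m, hm, u, hu⟩ := UniqueFactorizationMonoid.exists_prime_factors P hP0
    have h1 : φ m.prod = 0 := by
      have : φ m.prod * φ u = 0 := by rw [← map_mul, hu, hP]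
      rcases mul_eq_zero.1 this with h | h
      · exact h
      · exact absurd h (u.isUnit.map φ).ne_zero
    rw [map_multiset_prod, Multiset.prod_eq_zero_iff, Multiset.mem_map] at h1
    obtain ⟨H, hH, h0⟩ := h1
    exact ⟨H, hm H hH, (Multiset.dvd_prod hH).trans ⟨u, hu.symm⟩, h0⟩
  refine ⟨H, hH.1, ?_, hH.2⟩
  have hdeg : 0 < H.natDegree := by
    by_contra hd
    have h0 : H.natDegree = 0 := by omega
    rw [Polynomial.natDegree_eq_zero] at h0
    obtain ⟨c, rfl⟩ := h0
    have : c = 0 := hφ (by simpa using hH.2)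
    apply hHP.ne_zero; simp [this]
  let K := FractionRing R
  have : NormalizedGCDMonoid R := Classical.choice inferInstance
  have hprim : H.IsPrimitive := hHP.irreducible.isPrimitive (by omega)
  have hirr : Irreducible (H.map (algebraMap R K)) :=
    (hprim.irreducible_iff_irreducible_map_fraction_map).1 hHP.irreducible
  by_cases hQ0 : Q = 0
  · simp [hQ0]
  -- φ extends to K[X]
  let ψ0 : K →+* L := IsFractionRing.lift (g := φ.comp C) hφ
  let ψ : K[X] →+* L := Polynomial.eval₂RingHom ψ0 (φ X)
  have hψ : ∀ p : R[X], ψ (p.map (algebraMap R K)) = φ p := by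
    intro p
    have : (ψ.comp (Polynomial.mapRingHom (algebraMap R K))) = φ := by
      apply Polynomial.ringHom_ext
      · intro a; simp [ψ, ψ0]
      · simp [ψ]
    exact congrArg (fun g => g p) this
  have hdvd : H.map (algebraMap R K) ∣ Q.map (algebraMap R K) := by
    by_contra hnd
    have hco : IsCoprime (H.map (algebraMap R K)) (Q.map (algebraMap R K)) :=
      (hirr.coprime_iff_not_dvd).2 hnd
    obtain ⟨a, b, hab⟩ := hco
    have := congrArg ψ hab
    rw [map_add, map_mul, map_mul, hψ, hψ, hH.2, hQ] at this
    simp at this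
  exact hprim.dvd_of_fraction_map_dvd_fraction_map (K := K) hdvd

lemma G2 {σ F L : Type*} [DecidableEq σ] [Finite σ] [Field F] [Field L] [Algebra F L] (i : σ) (x : σ → L)
    (hx : AlgebraicIndependent F (fun j : {j // j ≠ i} => x j)) {P Q : MvPolynomial σ F}
    (hP : MvPolynomial.aeval x P = 0) (hQ : MvPolynomial.aeval x Q = 0) (hP0 : P ≠ 0) :
    ∃ H, H ∣ P ∧ H ∣ Q ∧ MvPolynomial.aeval x H = 0 := by
  let e1 := MvPolynomial.renameEquiv F (Equiv.optionSubtypeNe i).symm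
  let e2 := MvPolynomial.optionEquivLeft F {j // j ≠ i}
  let e := e1.trans e2
  let φ : Polynomial (MvPolynomial {j // j ≠ i} F) →+* L :=
    (MvPolynomial.aeval x : MvPolynomial σ F →ₐ[F] L).toRingHom.comp (e.symm : _ →+* _)
  have hφe : ∀ p, φ (e p) = MvPolynomial.aeval x p := by intro p; simp [φ]
  have hC : ∀ p, φ (Polynomial.C p) = MvPolynomial.aeval (fun j : {j // j ≠ i} => x j) p := by
    intro p
    have : e (MvPolynomial.rename (fun j : {j // j ≠ i} => (j : σ)) p) = Polynomial.C p := by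
      simp only [e, e1, e2, AlgEquiv.trans_apply, MvPolynomial.renameEquiv_apply, MvPolynomial.rename_rename]
      induction p using MvPolynomial.induction_on with
      | C a => simp
      | add p q hp hq => simp only [map_add, hp, hq]
      | mul_X p j hp =>
        simp only [map_mul, hp]
        congr 1
        simp [Equiv.optionSubtypeNe_symm_of_ne j.2, MvPolynomial.optionEquivLeft_X_some]
    rw [← this, hφe, MvPolynomial.aeval_rename]
    rfl
  have hinj : Function.Injective (φ.comp Polynomial.C) := by
    intro a b h
    apply hx
    rw [← hC, ← hC]; exact h
  obtain ⟨H, h1, h2, h3⟩ := G1 φ hinj (P := e P) (Q := e Q) (by rw [hφe, hP]) (by rw [hφe, hQ]) (by simpa using hP0)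
  refine ⟨e.symm H, ?_, ?_, ?_⟩
  · simpa using map_dvd e.symm h1
  · simpa using map_dvd e.symm h2
  · exact h3


lemma fam {N : ℕ} {K : Subfield ℂ} (x : Fin N → ℂ) {I : Set ℂ} (hI : I ⊆ Set.range x)
    (hind : AlgebraicIndependent K (Subtype.val : I → ℂ)) {k : ℕ} (hk : (k : ℕ∞) ≤ I.encard) :
    ∃ J : Finset (Fin N), k ≤ J.card ∧ AlgebraicIndependent K (fun j : {j // j ∈ J} => x j) := by
  classical
  obtain ⟨u, hu, hinj⟩ := Set.exists_image_eq_injOn_of_subset_range hI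
  have huf : u.Finite := Set.toFinite u
  refine ⟨huf.toFinset, ?_, ?_⟩
  · rw [← hu, hinj.encard_image, huf.encard_eq_coe_toFinset_card] at hk
    exact_mod_cast hk
  · have hm : ∀ j : {j // j ∈ huf.toFinset}, x j ∈ I := fun j => hu ▸ ⟨j, by simpa using j.2, rfl⟩
    exact hind.comp (fun j : {j // j ∈ huf.toFinset} => (⟨x j, hm j⟩ : I)) (fun a b h => by
      apply Subtype.ext
      exact hinj (by simpa using a.2) (by simpa using b.2) (by simpa using h))

lemma toPoly {α ι : Type*} [Fintype ι] (K : Subfield ℂ) (J : Finset α) (c : α → ℂ) (hc : ∀ a ∈ J, c a ∈ K)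
    (n : α → ι → ℤ) : ∃ (P : MvPolynomial ι K) (A : ℕ), (∀ x : ι → ℂ, (∀ i, x i ≠ 0) →
      MvPolynomial.aeval x P = (∏ i, x i ^ A) * ∑ a ∈ J, c a * ∏ i, x i ^ (n a i)) ∧
      (Set.InjOn n J → P = 0 → ∀ a ∈ J, c a = 0) := by
  classical
  let A : ℕ := ∑ a ∈ J, ∑ i, (n a i).natAbs
  have hA : ∀ a ∈ J, ∀ i, 0 ≤ n a i + A := by
    intro a ha i
    have h1 : (n a i).natAbs ≤ ∑ i, (n a i).natAbs :=
      Finset.single_le_sum (f := fun i => (n a i).natAbs) (fun _ _ => Nat.zero_le _) (Finset.mem_univ i)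
    have h2 : ∑ i, (n a i).natAbs ≤ A :=
      Finset.single_le_sum (f := fun a => ∑ i, (n a i).natAbs) (fun _ _ => Nat.zero_le _) ha
    omega
  let e : α → ι →₀ ℕ := fun a => Finsupp.equivFunOnFinite.symm (fun i => (n a i + A).toNat)
  let c' : α → K := fun a => if h : c a ∈ K then ⟨c a, h⟩ else 0
  have hc' : ∀ a ∈ J, (c' a : ℂ) = c a := by
    intro a ha
    simp [c', hc a ha]
  refine ⟨∑ a ∈ J, MvPolynomial.monomial (e a) (c' a), A, ?_, ?_⟩
  · intro x hx
    rw [map_sum, Finset.mul_sum]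
    refine Finset.sum_congr rfl fun a ha => ?_
    rw [MvPolynomial.aeval_monomial]
    have h1 : (algebraMap K ℂ) (c' a) = c a := hc' a ha
    rw [h1, Finsupp.prod_fintype _ _ (by simp)]
    rw [mul_left_comm, ← Finset.prod_mul_distrib]
    congr 1
    refine Finset.prod_congr rfl fun i _ => ?_
    have h2 : ((e a i : ℕ) : ℤ) = A + n a i := by
      simp only [e, Finsupp.equivFunOnFinite_symm_apply_apply]
      rw [Int.toNat_of_nonneg (hA a ha i), add_comm]
    rw [← zpow_natCast, h2, zpow_add₀ (hx i), zpow_natCast]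
  · intro hinj h0 a ha
    have h1 := congrArg (MvPolynomial.coeff (e a)) h0
    rw [MvPolynomial.coeff_sum, Finset.sum_eq_single a] at h1
    · rw [MvPolynomial.coeff_monomial, if_pos rfl] at h1
      rw [← hc' a ha, h1]; simp
    · intro b hb hba
      rw [MvPolynomial.coeff_monomial, if_neg]
      intro h
      apply hba
      apply hinj hb ha
      funext i
      have := congrArg (fun f => f i) h
      simp only [e, Finsupp.equivFunOnFinite_symm_apply_apply] at this
      have h1 := hA a ha i
      have h2 := hA b hb i
      omega
    · intro h; exact absurd ha h

lemma iep_poly {ι : Type*} (K : Subfield ℂ) (v : ι → ℂ) (H : MvPolynomial ι K) :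
    IsExpPoly (fun z => MvPolynomial.aeval (fun i => Complex.exp (v i * z)) H) := by
  induction H using MvPolynomial.induction_on with
  | C a => simpa using iep_const _
  | add p q hp hq => (simp only [map_add]; exact iep_add hp hq)
  | mul_X p i hp =>
    have := iep_mul hp (iep_exp 1 (v i))
    convert this using 1
    ext z; simp

lemma exp_comb {ι : Type*} [Fintype ι] (v : ι → ℂ) (n : ι → ℤ) (z : ℂ) :
    Complex.exp ((∑ i, (n i : ℂ) * v i) * z) = ∏ i, Complex.exp (v i * z) ^ n i := by
  rw [Finset.sum_mul, Complex.exp_sum]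
  refine Finset.prod_congr rfl fun i _ => ?_
  rw [← Complex.exp_int_mul]; congr 1; ring

lemma rzero {f g : ℂ → ℂ} (hf : EIrreducible f) (hg : EIrreducible g)
    (hne : ¬ ∃ u : ℂ → ℂ, EUnit u ∧ f = u * g) {Ff Fg : ℂ →₀ ℂ}
    (ef : ∀ z, f z = evF Ff z) (eg : ∀ z, g z = evF Fg z) {N : ℕ} (v : Fin N → ℂ) (n : ℂ → Fin N → ℤ)
    (h1 : ∀ μ ∈ Ff.support, μ = ∑ i, (n μ i : ℂ) * v i) (h2 : ∀ μ ∈ Fg.support, μ = ∑ i, (n μ i : ℂ) * v i)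
    (K : Subfield ℂ) (k1 : ∀ μ, Ff μ ∈ K) (k2 : ∀ μ, Fg μ ∈ K) (s : ℂ) (hs1 : f s = 0) (hs2 : g s = 0)
    (i : Fin N) (hx : AlgebraicIndependent K (fun j : {j // j ≠ i} => Complex.exp (v j * s))) : False := by
  classical
  obtain ⟨P, A, hP, hP0⟩ := toPoly K Ff.support Ff (fun a _ => k1 a) n
  obtain ⟨Q, B, hQ, hQ0⟩ := toPoly K Fg.support Fg (fun a _ => k2 a) n
  have key : ∀ (F : ℂ →₀ ℂ), (∀ μ ∈ F.support, μ = ∑ i, (n μ i : ℂ) * v i) → ∀ z,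
      ∑ a ∈ F.support, F a * ∏ i, Complex.exp (v i * z) ^ (n a i) = evF F z := by
    intro F hF z
    rw [evF]
    refine Finset.sum_congr rfl fun a ha => ?_
    rw [← exp_comb, ← hF a ha]
  have hPz : ∀ z, MvPolynomial.aeval (fun i => Complex.exp (v i * z)) P =
      (∏ i, Complex.exp (v i * z) ^ A) * f z := by
    intro z; rw [hP _ (fun i => Complex.exp_ne_zero _), key _ h1, ef]
  have hQz : ∀ z, MvPolynomial.aeval (fun i => Complex.exp (v i * z)) Q =
      (∏ i, Complex.exp (v i * z) ^ B) * g z := by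
    intro z; rw [hQ _ (fun i => Complex.exp_ne_zero _), key _ h2, eg]
  have hPne : P ≠ 0 := by
    intro h
    have hz : ∀ z, f z = 0 := by
      intro z
      have := hPz z
      rw [h, map_zero] at this
      rcases mul_eq_zero.1 this.symm with h | h
      · exact absurd h (Finset.prod_ne_zero_iff.2 fun i _ => pow_ne_zero _ (Complex.exp_ne_zero _))
      · exact h
    exact hf.2.1 (funext hz)
  obtain ⟨H, ⟨P', hHP⟩, ⟨Q', hHQ⟩, hH⟩ := G2 i (fun i => Complex.exp (v i * s)) hx (P := P) (Q := Q)
    (by rw [hPz, hs1, mul_zero]) (by rw [hQz, hs2, mul_zero]) hPne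
  have hmono : ∀ (A : ℕ) z, Complex.exp ((-(A:ℂ) * ∑ i, v i) * z) * (∏ i, Complex.exp (v i * z) ^ A) = 1 := by
    intro A z
    rw [Finset.prod_pow, ← Complex.exp_sum, ← Complex.exp_nat_mul, ← Complex.exp_add, ← Complex.exp_zero]
    congr 1
    rw [← Finset.sum_mul]; ring
  refine CF hf hg hne (h := fun z => MvPolynomial.aeval (fun i => Complex.exp (v i * z)) H)
    (k := (fun z => 1 * Complex.exp ((-(A:ℂ) * ∑ i, v i) * z)) * fun z => MvPolynomial.aeval (fun i => Complex.exp (v i * z)) P')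
    (k' := (fun z => 1 * Complex.exp ((-(B:ℂ) * ∑ i, v i) * z)) * fun z => MvPolynomial.aeval (fun i => Complex.exp (v i * z)) Q')
    (iep_poly K v H) (iep_mul (iep_exp _ _) (iep_poly K v P')) (iep_mul (iep_exp _ _) (iep_poly K v Q')) ?_ ?_ hH
  · ext z
    have h3 := hPz z
    rw [hHP, map_mul] at h3
    simp only [Pi.mul_apply, one_mul]
    rw [mul_left_comm, h3, ← mul_assoc, hmono, one_mul]
  · ext z
    have h3 := hQz z
    rw [hHQ, map_mul] at h3
    simp only [Pi.mul_apply, one_mul]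
    rw [mul_left_comm, h3, ← mul_assoc, hmono, one_mul]


lemma rpos {F : ℂ →₀ ℂ} (hF : F ≠ 0) {N : ℕ} (v : Fin N → ℂ)
    (hv : ∀ μ ∈ F.support, μ ∈ Submodule.span ℚ (Set.range v))
    {X A : Set ℂ} (hX : X.Finite) (hA : ∀ a ∈ A, Complex.exp a ∈ clF X) (hF1 : ∀ μ, F μ ∈ clF X)
    {s : ℂ} (hs : s ∈ clF X)
    (hrk : MQ.eRk X + Module.finrank ℚ (Submodule.span ℚ
        (Set.range fun j => (Submodule.span ℚ A).mkQ (v j * s))) ≤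
      MQ.eRk (X ∪ insert s (Set.range fun j => Complex.exp (v j * s))))
    (hd : ∀ μ ∈ F.support, ∀ ν ∈ F.support, μ ≠ ν → (μ - ν) * s ∉ Submodule.span ℚ A) :
    evF F s ≠ 0 := by
  classical
  set U := Submodule.span ℚ A with hU
  set D := Submodule.span ℚ (Set.range fun j => U.mkQ (v j * s)) with hD
  have hDf : Module.Finite ℚ D := FiniteDimensional.span_of_finite ℚ (Set.finite_range _)
  let b := Module.finBasis ℚ D
  set d := Module.finrank ℚ D
  choose u hu using fun i => U.mkQ_surjective (b i : ℂ ⧸ U)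
  have hmem : ∀ μ ∈ Submodule.span ℚ (Set.range v), U.mkQ (μ * s) ∈ D := by
    intro μ hμ
    induction hμ using Submodule.span_induction with
    | mem x h => obtain ⟨j, rfl⟩ := h; exact Submodule.subset_span ⟨j, rfl⟩
    | zero => simp
    | add x y _ _ h1 h2 => rw [add_mul, map_add]; exact add_mem h1 h2
    | smul q x _ h => rw [smul_mul_assoc, map_smul]; exact D.smul_mem _ h
  -- rational coordinates
  have hq : ∀ μ : ℂ, ∃ q : Fin d → ℚ, μ ∈ Submodule.span ℚ (Set.range v) →
      μ * s - ∑ i, (q i : ℂ) * u i ∈ U := by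
    intro μ
    by_cases h : μ ∈ Submodule.span ℚ (Set.range v)
    · refine ⟨fun i => b.repr ⟨_, hmem μ h⟩ i, fun _ => ?_⟩
      rw [← Submodule.Quotient.eq, ← Submodule.mkQ_apply, ← Submodule.mkQ_apply, map_sum]
      have h1 := congrArg (fun x : D => (x : ℂ ⧸ U)) (b.sum_repr ⟨_, hmem μ h⟩)
      simp only [Submodule.coe_sum, Submodule.coe_smul] at h1
      refine h1.symm.trans ?_
      refine Finset.sum_congr rfl fun i _ => ?_
      rw [← hu, ← map_smul, Rat.smul_def]
    · exact ⟨0, fun h' => absurd h' h⟩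
  choose q hq using hq
  obtain ⟨m, hm, hmq⟩ := common_den (F.support.biUnion fun μ => Finset.univ.image (q μ))
  have hn : ∀ μ i, ∃ n : ℤ, μ ∈ F.support → q μ i = n / m := by
    intro μ i
    by_cases h : μ ∈ F.support
    · obtain ⟨n, hn⟩ := hmq (q μ i) (by
        rw [Finset.mem_biUnion]; exact ⟨μ, h, Finset.mem_image_of_mem _ (Finset.mem_univ i)⟩)
      exact ⟨n, fun _ => hn⟩
    · exact ⟨0, fun h' => absurd h' h⟩
  choose n hn using hn
  have hm' : (m : ℂ) ≠ 0 := by exact_mod_cast hm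
  let y : Fin d → ℂ := fun i => Complex.exp (u i / m)
  -- y algebraically independent
  have hy : AlgebraicIndependent (clF X) y := by
    have hle : MQ.eRk X + d ≤ MQ.eRk (X ∪ Set.range y) := by
      refine hrk.trans (rk_le_clF ?_)
      have hmono : clF X ≤ clF (X ∪ Set.range y) :=
        clF_mono (Set.subset_union_left.trans clF_sub)
      have hu' : ∀ a ∈ A ∪ Set.range (fun i => u i / m), Complex.exp a ∈ clF (X ∪ Set.range y) := by
        rintro a (ha | ⟨i, rfl⟩)
        · exact hmono (hA a ha)
        · exact clF_sub (Or.inr ⟨i, rfl⟩)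
      rintro x (hx | rfl | ⟨j, rfl⟩)
      · exact hmono (clF_sub hx)
      · exact hmono hs
      · refine clF_exp hu' ?_
        have h1 := hq (v j) (Submodule.subset_span ⟨j, rfl⟩)
        have h2 : v j * s = (v j * s - ∑ i, (q (v j) i : ℂ) * u i) + ∑ i, (q (v j) i * m : ℚ) • (u i / m) := by
          have : ∀ i, (q (v j) i * m : ℚ) • (u i / m) = (q (v j) i : ℂ) * u i := by
            intro i; rw [Rat.smul_def]; push_cast; field_simp
          simp only [this]; ring
        rw [h2]
        refine add_mem (Submodule.span_mono Set.subset_union_left h1) (Submodule.sum_mem _ fun i _ => ?_)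
        exact Submodule.smul_mem _ _ (Submodule.subset_span (Or.inr ⟨i, rfl⟩))
    obtain ⟨I, hI, hk, hind⟩ := rk_ext hX d hle
    obtain ⟨J, hJ, hJi⟩ := fam y hI hind hk
    have hJu : J = Finset.univ := by
      apply Finset.eq_univ_of_card
      have := J.card_le_univ
      simp at this ⊢; omega
    subst hJu
    exact hJi.comp (fun i => ⟨i, Finset.mem_univ i⟩) (fun a b h => by simpa using h)
  -- expand
  let t : ℂ → ℂ := fun μ => μ * s - ∑ i, (q μ i : ℂ) * u i
  obtain ⟨P, B, hP, hP0⟩ := toPoly (clF X) F.support (fun μ => F μ * Complex.exp (t μ))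
    (fun μ hμ => mul_mem (hF1 μ) (clF_exp hA (hq μ (hv μ hμ)))) n
  intro h0
  have hPy := hP y (fun i => Complex.exp_ne_zero _)
  have hsum : ∑ a ∈ F.support, F a * Complex.exp (t a) * ∏ i, y i ^ n a i = evF F s := by
    rw [evF]
    refine Finset.sum_congr rfl fun μ hμ => ?_
    have h1 : ∏ i, y i ^ n μ i = Complex.exp (∑ i, (q μ i : ℂ) * u i) := by
      rw [Complex.exp_sum]
      refine Finset.prod_congr rfl fun i _ => ?_
      rw [← Complex.exp_int_mul, hn μ i hμ]
      congr 1; push_cast; field_simp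
    rw [h1, mul_assoc, ← Complex.exp_add]
    congr 2
    simp only [t]; ring
  rw [hsum, h0, mul_zero] at hPy
  have hPz : P = 0 := hy (by rw [hPy, map_zero])
  obtain ⟨μ, hμ⟩ : ∃ μ, μ ∈ F.support := by
    by_contra h; push Not at h
    exact hF (Finsupp.support_eq_empty.1 (Finset.eq_empty_of_forall_notMem h))
  have := hP0 ?_ hPz μ hμ
  · rcases mul_eq_zero.1 this with h | h
    · exact (Finsupp.mem_support_iff.1 hμ) h
    · exact Complex.exp_ne_zero _ h
  · intro a ha c hc hac
    by_contra hne
    apply hd a ha c hc hne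
    have h1 := sub_mem (hq a (hv a ha)) (hq c (hv c hc))
    have hqq : q a = q c := by
      funext i; rw [hn a i ha, hn c i hc, hac]
    rw [hqq] at h1
    convert h1 using 1; ring


lemma lattice (T : Finset ℂ) : ∃ (N : ℕ) (v : Fin N → ℂ) (n : ℂ → Fin N → ℤ), LinearIndependent ℚ v ∧
    ∀ μ ∈ T, μ = ∑ i, (n μ i : ℂ) * v i := by
  classical
  let G := Submodule.span ℤ (T : Set ℂ)
  have h1 : Module.Finite ℤ G := Module.Finite.span_of_finite ℤ T.finite_toSet
  have h2 : Module.Free ℤ G := inferInstance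
  let b := Module.finBasis ℤ G
  refine ⟨_, fun i => (b i : ℂ), fun μ => if h : μ ∈ G then fun i => b.repr ⟨μ, h⟩ i else 0, ?_, ?_⟩
  · rw [← LinearIndependent.iff_fractionRing ℤ ℚ]
    exact b.linearIndependent.map' G.subtype (Submodule.ker_subtype G)
  · intro μ hμ
    have h : μ ∈ G := Submodule.subset_span hμ
    simp only [h, dif_pos]
    have h3 := congrArg (fun x : G => (x : ℂ)) (b.sum_repr ⟨μ, h⟩)
    simp only [Submodule.coe_sum, Submodule.coe_smul, zsmul_eq_mul] at h3
    exact h3.symm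

lemma fr_add {ι : Type*} [Finite ι] {A : Set ℂ} (hA : A.Finite) (w : ι → ℂ) :
    Module.finrank ℚ (Submodule.span ℚ (A ∪ Set.range w)) = Module.finrank ℚ (Submodule.span ℚ A) +
      Module.finrank ℚ (Submodule.span ℚ (Set.range fun j => (Submodule.span ℚ A).mkQ (w j))) := by
  set U := Submodule.span ℚ A
  set E := Submodule.span ℚ (A ∪ Set.range w)
  have hE : Module.Finite ℚ E := FiniteDimensional.span_of_finite ℚ (hA.union (Set.finite_range _))
  have hUE : U ≤ E := Submodule.span_mono Set.subset_union_left
  have h := LinearMap.finrank_range_add_finrank_ker (U.mkQ.domRestrict E)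
  have hr : LinearMap.range (U.mkQ.domRestrict E) =
      Submodule.span ℚ (Set.range fun j => U.mkQ (w j)) := by
    rw [LinearMap.range_domRestrict]
    simp only [E]
    rw [Submodule.span_union, Submodule.map_sup, Submodule.map_span U.mkQ (Set.range w), ← Set.range_comp]
    have : Submodule.map U.mkQ (Submodule.span ℚ A) = ⊥ := by
      exact Submodule.mkQ_map_self U
    rw [this, bot_sup_eq]; rfl
  have hk : Module.finrank ℚ (LinearMap.ker (U.mkQ.domRestrict E)) = Module.finrank ℚ U := by
    have : LinearMap.ker (U.mkQ.domRestrict E) = U.submoduleOf E := by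
      rw [LinearMap.ker_domRestrict, Submodule.ker_mkQ]; rfl
    rw [this]
    exact (Submodule.submoduleOfEquivOfLe hUE).finrank_eq
  rw [hr, hk] at h
  omega

lemma evF_const {f : ℂ → ℂ} {F : ℂ →₀ ℂ} (ef : ∀ z, f z = evF F z) (h : ∀ μ ∈ F.support, μ = 0) {s : ℂ}
    (hs : f s = 0) : f = 0 := by
  ext z
  rw [ef, Pi.zero_apply, ← hs, ef, evF, evF]
  refine Finset.sum_congr rfl fun μ hμ => ?_
  rw [h μ hμ]; simp

def XT {N : ℕ} (v : Fin N → ℂ) (B : Set ℂ) (T : Finset ℂ) : Set ℂ :=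
  (Set.range v ∪ B) ∪ (↑T ∪ Set.image2 (fun i t => Complex.exp (v i * t)) Set.univ ↑T)

def AT {N : ℕ} (v : Fin N → ℂ) (T : Finset ℂ) : Set ℂ :=
  Set.image2 (fun i t => v i * t) Set.univ ↑T

lemma XT_fin {N : ℕ} (v : Fin N → ℂ) {B : Set ℂ} (hB : B.Finite) (T : Finset ℂ) : (XT v B T).Finite :=
  ((Set.finite_range v).union hB).union
    (T.finite_toSet.union (Set.Finite.image2 _ Set.finite_univ T.finite_toSet))

lemma AT_fin {N : ℕ} (v : Fin N → ℂ) (T : Finset ℂ) : (AT v T).Finite :=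
  Set.Finite.image2 _ Set.finite_univ T.finite_toSet

lemma XT_insert {N : ℕ} (v : Fin N → ℂ) (B : Set ℂ) (T : Finset ℂ) (s : ℂ) [DecidableEq ℂ] :
    XT v B (insert s T) = XT v B T ∪ insert s (Set.range fun j => Complex.exp (v j * s)) := by
  ext x
  simp only [XT, Finset.coe_insert, Set.mem_union, Set.mem_insert_iff, Set.mem_image2, Set.mem_range, Set.mem_univ,
    true_and]
  constructor
  · rintro (h | (rfl | h) | ⟨i, t, rfl | ht, rfl⟩)
    · tauto
    · tauto
    · tauto
    · exact Or.inr (Or.inr ⟨i, rfl⟩)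
    · exact Or.inl (Or.inr (Or.inr ⟨i, t, ht, rfl⟩))
  · rintro ((h | h | ⟨i, t, ht, rfl⟩) | rfl | ⟨i, rfl⟩)
    · tauto
    · tauto
    · exact Or.inr (Or.inr ⟨i, t, Or.inr ht, rfl⟩)
    · tauto
    · exact Or.inr (Or.inr ⟨i, s, Or.inl rfl, rfl⟩)

lemma AT_insert {N : ℕ} (v : Fin N → ℂ) (T : Finset ℂ) (s : ℂ) [DecidableEq ℂ] :
    AT v (insert s T) = AT v T ∪ (Set.range fun j => v j * s) := by
  ext x
  simp only [AT, Finset.coe_insert, Set.mem_union, Set.mem_insert_iff, Set.mem_image2, Set.mem_range, Set.mem_univ,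
    true_and]
  constructor
  · rintro ⟨i, t, rfl | ht, rfl⟩
    · exact Or.inr ⟨i, rfl⟩
    · exact Or.inl ⟨i, t, ht, rfl⟩
  · rintro (⟨i, t, ht, rfl⟩ | ⟨i, rfl⟩)
    · exact ⟨i, t, Or.inr ht, rfl⟩
    · exact ⟨i, s, Or.inl rfl, rfl⟩

lemma AT_sub {N : ℕ} (v : Fin N → ℂ) (B : Set ℂ) (T : Finset ℂ) : AT v T ⊆ clF (XT v B T) := by
  rintro _ ⟨i, _, t, ht, rfl⟩
  exact mul_mem (clF_sub (Or.inl (Or.inl ⟨i, rfl⟩))) (clF_sub (Or.inr (Or.inl ht)))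

lemma AT_exp {N : ℕ} (v : Fin N → ℂ) (B : Set ℂ) (T : Finset ℂ) :
    ∀ a ∈ AT v T, Complex.exp a ∈ clF (XT v B T) := by
  rintro _ ⟨i, _, t, ht, rfl⟩
  exact clF_sub (Or.inr (Or.inr ⟨i, trivial, t, ht, rfl⟩))

lemma exists_min (hSC : SchanuelConjecture) {N : ℕ} (v : Fin N → ℂ) {B : Set ℂ} (hB : B.Finite) (S : Set ℂ)  :
    ∃ T : Finset ℂ, ∀ s ∈ S, MQ.eRk (XT v B T) + Module.finrank ℚ (Submodule.span ℚ
        (Set.range fun j => (Submodule.span ℚ (AT v T)).mkQ (v j * s))) ≤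
      MQ.eRk (XT v B T ∪ insert s (Set.range fun j => Complex.exp (v j * s))) := by
  classical
  have hdef : ∀ T : Finset ℂ, ∃ m : ℕ, MQ.eRk (XT v B T) = Module.finrank ℚ (Submodule.span ℚ (AT v T)) + m := by
    intro T
    have h1 := sc_rk hSC (AT_fin v T) (AT_sub v B T) (AT_exp v B T)
    have h2 : MQ.eRk (XT v B T) ≠ ⊤ :=
      ((MQ.eRk_le_encard _).trans_lt (XT_fin v hB T).encard_lt_top).ne
    obtain ⟨k, hk⟩ := ENat.ne_top_iff_exists.1 h2
    rw [← hk] at h1 ⊢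
    have h3 : Module.finrank ℚ (Submodule.span ℚ (AT v T)) ≤ k := by exact_mod_cast h1
    obtain ⟨m, hm⟩ := Nat.exists_eq_add_of_le h3
    exact ⟨m, by exact_mod_cast hm⟩
  have hP : ∃ m : ℕ, ∃ T : Finset ℂ, MQ.eRk (XT v B T) = Module.finrank ℚ (Submodule.span ℚ (AT v T)) + m := by
    obtain ⟨m, hm⟩ := hdef ∅
    exact ⟨m, ∅, hm⟩
  obtain ⟨m0, ⟨T, hT⟩, hmin⟩ : ∃ m0 : ℕ, (∃ T : Finset ℂ, MQ.eRk (XT v B T) =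
      Module.finrank ℚ (Submodule.span ℚ (AT v T)) + m0) ∧ ∀ m : ℕ, (∃ T : Finset ℂ, MQ.eRk (XT v B T) =
      Module.finrank ℚ (Submodule.span ℚ (AT v T)) + m) → m0 ≤ m :=
    ⟨Nat.find hP, Nat.find_spec hP, fun m h => Nat.find_min' hP h⟩
  refine ⟨T, fun s hs => ?_⟩
  obtain ⟨m, hm⟩ := hdef (insert s T)
  have hle := hmin m ⟨_, hm⟩
  rw [← XT_insert, hm, hT, AT_insert, fr_add (AT_fin v T)]
  norm_cast
  omega


theorem main_thm {f g : ℂ → ℂ} (hSC : SchanuelConjecture) (hf : EIrreducible f) (hg : EIrreducible g)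
    (hne : ¬ ∃ u : ℂ → ℂ, EUnit u ∧ f = u * g) : {z : ℂ | f z = 0 ∧ g z = 0}.Finite := by
  classical
  by_contra hinf
  set S := {z : ℂ | f z = 0 ∧ g z = 0} with hSdef
  have hS : S.Infinite := hinf
  have h0 : ∀ s ∈ S, f s = 0 ∧ g s = 0 := fun s hs => hs
  obtain ⟨Ff, ef⟩ := exists_F hf.1
  obtain ⟨Fg, eg⟩ := exists_F hg.1
  obtain ⟨N, v, n, hv, hn⟩ := lattice (Ff.support ∪ Fg.support)
  have hn1 : ∀ μ ∈ Ff.support, μ = ∑ i, (n μ i : ℂ) * v i :=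
    fun μ h => hn μ (Finset.mem_union_left _ h)
  have hn2 : ∀ μ ∈ Fg.support, μ = ∑ i, (n μ i : ℂ) * v i :=
    fun μ h => hn μ (Finset.mem_union_right _ h)
  set B : Set ℂ := Ff '' Ff.support ∪ Fg '' Fg.support
  have hB : B.Finite := (Ff.support.finite_toSet.image _).union (Fg.support.finite_toSet.image _)
  obtain ⟨T, hT⟩ := exists_min hSC v hB S
  set X := XT v B T with hXdef
  have hX : X.Finite := XT_fin v hB T
  have hBX : B ⊆ clF X := fun b hb => clF_sub (Or.inl (Or.inr hb))
  have hvX : ∀ i, v i ∈ clF X := fun i => clF_sub (Or.inl (Or.inl ⟨i, rfl⟩))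
  have k1 : ∀ μ, Ff μ ∈ clF X := by
    intro μ
    by_cases h : μ ∈ Ff.support
    · exact hBX (Or.inl ⟨μ, h, rfl⟩)
    · rw [Finsupp.notMem_support_iff.1 h]; exact zero_mem _
  have k2 : ∀ μ, Fg μ ∈ clF X := by
    intro μ
    by_cases h : μ ∈ Fg.support
    · exact hBX (Or.inr ⟨μ, h, rfl⟩)
    · rw [Finsupp.notMem_support_iff.1 h]; exact zero_mem _
  set U := Submodule.span ℚ (AT v T) with hU
  have hUX : ∀ x ∈ U, x ∈ clF X := by
    intro x hx
    induction hx using Submodule.span_induction with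
    | mem x h => exact AT_sub v B T h
    | zero => exact zero_mem _
    | add x y _ _ h1 h2 => exact add_mem h1 h2
    | smul q x _ h => rw [Rat.smul_def]; exact clF_smul q h
  have hF0 : Ff ≠ 0 := by
    intro h
    apply hf.2.1
    ext z; rw [ef, h]; simp [evF]
  have hkey : ∀ s ∈ S, ∃ p : ℂ × ℂ, p ∈ Ff.support ×ˢ Ff.support ∧ p.1 ≠ p.2 ∧ (p.1 - p.2) * s ∈ U := by
    intro s hs
    by_contra hno
    have hd : ∀ μ ∈ Ff.support, ∀ ν ∈ Ff.support, μ ≠ ν → (μ - ν) * s ∉ U := by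
      intro μ hμ ν hν hμν hm
      exact hno ⟨(μ, ν), Finset.mem_product.2 ⟨hμ, hν⟩, hμν, hm⟩
    have hrk := hT s hs
    by_cases hli : LinearIndependent ℚ (fun j => U.mkQ (v j * s))
    · have hdN := finrank_span_eq_card hli
      rw [Fintype.card_fin] at hdN
      rw [hdN] at hrk
      obtain ⟨I, hI, hk, hind⟩ := rk_ext hX N hrk
      rcases Nat.eq_zero_or_pos N with hN0 | hNpos
      · subst hN0
        exact hf.2.1 (evF_const ef (fun μ hμ => by rw [hn1 μ hμ]; simp) (h0 s hs).1)
      have hI' : I \ {s} ⊆ Set.range (fun j => Complex.exp (v j * s)) := by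
        rintro y ⟨hy, hys⟩
        rcases hI hy with h | h
        · exact absurd h hys
        · exact h
      have hk' : ((N - 1 : ℕ) : ℕ∞) ≤ (I \ {s}).encard := by
        have h1 : I.encard ≤ (I \ {s}).encard + 1 := by
          have := Set.encard_le_encard_sdiff_add_encard I {s}
          rwa [Set.encard_singleton] at this
        have h2 := hk.trans h1
        have h3 : (N : ℕ∞) = ((N - 1 : ℕ) : ℕ∞) + 1 := by
          norm_cast; omega
        rw [h3] at h2
        exact (ENat.add_le_add_iff_right (by simp)).1 h2
      obtain ⟨J, hJ, hJi⟩ := fam (fun j => Complex.exp (v j * s)) hI'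
        (hind.comp (Set.inclusion Set.sdiff_subset) (Set.inclusion_injective _)) hk'
      obtain ⟨i, hi⟩ : ∃ i : Fin N, ∀ j, j ≠ i → j ∈ J := by
        have hc : Jᶜ.card ≤ 1 := by
          rw [Finset.card_compl, Fintype.card_fin]; omega
        rcases Finset.eq_empty_or_nonempty Jᶜ with h | ⟨i, hi⟩
        · refine ⟨⟨0, hNpos⟩, fun j _ => ?_⟩
          by_contra hj
          have := Finset.mem_compl.2 hj
          rw [h] at this; simp at this
        · refine ⟨i, fun j hj => ?_⟩
          by_contra hj'
          exact hj (Finset.card_le_one.1 hc j (Finset.mem_compl.2 hj') i hi)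
      refine rzero hf hg hne ef eg v n hn1 hn2 (clF X) k1 k2 s (h0 s hs).1 (h0 s hs).2 i ?_
      exact hJi.comp (fun j : {j // j ≠ i} => ⟨j.1, hi j.1 j.2⟩) (fun a b h => Subtype.ext (by simpa using h))
    · rw [Fintype.not_linearIndependent_iff] at hli
      obtain ⟨c, hc, i, hi⟩ := hli
      have hw : ∑ j, c j • v j ≠ 0 := by
        intro h
        exact hi (Fintype.linearIndependent_iff.1 hv c h i)
      have hws : (∑ j, c j • v j) * s ∈ U := by
        rw [← Submodule.Quotient.mk_eq_zero, ← Submodule.mkQ_apply, Finset.sum_mul, map_sum, ← hc]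
        refine Finset.sum_congr rfl fun j _ => ?_
        rw [smul_mul_assoc, map_smul]
      have hwX : ∑ j, c j • v j ∈ clF X := by
        refine sum_mem fun j _ => ?_
        rw [Rat.smul_def]; exact clF_smul _ (hvX j)
      have hsX : s ∈ clF X := by
        have := div_mem (hUX _ hws) hwX
        rwa [mul_div_cancel_left₀ _ hw] at this
      refine rpos hF0 v ?_ hX (AT_exp v B T) k1 hsX hrk hd ?_
      · intro μ hμ
        rw [hn1 μ hμ]
        refine Submodule.sum_mem _ fun j _ => ?_
        rw [← zsmul_eq_mul]
        exact zsmul_mem (Submodule.subset_span (Set.mem_range_self j)) _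
      · rw [← ef]; exact (h0 s hs).1
  have hkey' : ∀ s, ∃ p : ℂ × ℂ, s ∈ S → p ∈ Ff.support ×ˢ Ff.support ∧ p.1 ≠ p.2 ∧ (p.1 - p.2) * s ∈ U := by
    intro s
    by_cases hs : s ∈ S
    · obtain ⟨p, hp⟩ := hkey s hs
      exact ⟨p, fun _ => hp⟩
    · exact ⟨0, fun h => absurd h hs⟩
  choose p hp using hkey'
  obtain ⟨b, hb⟩ := pigeon hS p ((Ff.support ×ˢ Ff.support).finite_toSet.subset (by
    rintro _ ⟨s, hs, rfl⟩; exact (hp s hs).1))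
  have hw : b.1 - b.2 ≠ 0 := by
    obtain ⟨s, hs, hsb⟩ := hb.nonempty
    rw [← hsb]; exact sub_ne_zero.2 (hp s hs).2.1
  refine final_fd hSC hf hg hne ef eg _ hb (fun s hs => h0 s hs.1)
    (U.map (LinearMap.mulLeft ℚ ((b.1 - b.2)⁻¹))) (Submodule.FG.map _ (Submodule.fg_span (AT_fin v T))) ?_
  rintro s ⟨hs, hsb⟩
  refine ⟨(b.1 - b.2) * s, ?_, ?_⟩
  · rw [← hsb]; exact (hp s hs).2.2
  · simp [hw]

/-- Assuming Schanuel's Conjecture: two irreducible exponential polynomials which are not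
unit multiples of each other have only finitely many common zeros. -/
theorem shapiro_distinct_irreducibles (hSC : SchanuelConjecture)
    (f g : ℂ → ℂ) (hf : EIrreducible f) (hg : EIrreducible g)
    (hne : ¬ ∃ u : ℂ → ℂ, EUnit u ∧ f = u * g) :
    {z : ℂ | f z = 0 ∧ g z = 0}.Finite := by
  exact main_thm hSC hf hg hne
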